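/- Let P_k = 𝓛_k + V_k (k = 1,2) be two Schrödinger operators on ℝ^d as in the context, with λ_k* their generalized principal eigenvalues. Assume: a₁ = a₂ and b₁ = b₂ outside a compact subset of ℝ^d; V₁(x) − V₂(x) → 0 as |x| → ∞; λ₁* is strictly monotone at V₁ (so 𝓛₁ + V₁ − λ₁* admits a ground state Ψ₁*); λ₂* ≤ λ₁*; and there exist a C² function Ψ (possibly sign-changing) with Ψ⁺ not identically zero and C > 0 such that 𝓛₂Ψ + V₂Ψ ≥ λ₁*Ψ on ℝ^d and Ψ⁺(x) ≤ C Ψ₁*(x) for all x ∈ ℝ^d. Then λ₂* is strictly monotone at V₂, λ₁* = λ₂*, the operator 𝓛₂ + V₂ − λ₂* is critical in ℝ^d, and Ψ is a positive scalar multiple of its ground state (in particular Ψ > 0). -/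

import Mathlib

open Metric Set Filter

noncomputable section

/-- `ℝ^d` as a Euclidean space. -/
abbrev Euc (d : ℕ) := EuclideanSpace ℝ (Fin d)

/-- First partial derivative `∂u/∂xᵢ`. -/
def pd {d : ℕ} (u : Euc d → ℝ) (i : Fin d) (x : Euc d) : ℝ :=
  fderiv ℝ u x (EuclideanSpace.single i 1)

/-- Second partial derivative `∂²u/∂xᵢ∂xⱼ`. -/
def pd2 {d : ℕ} (u : Euc d → ℝ) (i j : Fin d) (x : Euc d) : ℝ :=
  fderiv ℝ (fun y => pd u j y) x (EuclideanSpace.single i 1)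

/-- The second-order operator `𝓛u = Σ aᶦʲ ∂ᵢⱼu + Σ bᶦ ∂ᵢu`. -/
def Lop {d : ℕ} (a : Euc d → Matrix (Fin d) (Fin d) ℝ) (b : Euc d → Euc d)
    (u : Euc d → ℝ) (x : Euc d) : ℝ :=
  (∑ i, ∑ j, a x i j * pd2 u i j x) + ∑ i, b x i * pd u i x

/-- Frobenius norm of a matrix. -/
def frob {d : ℕ} (m : Matrix (Fin d) (Fin d) ℝ) : ℝ :=
  Real.sqrt (∑ i, ∑ j, (m i j) ^ 2)

/-- The quadratic form `⟨ξ, m ξ⟩`. -/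
def quadForm {d : ℕ} (m : Matrix (Fin d) (Fin d) ℝ) (ξ : Euc d) : ℝ :=
  ∑ i, ∑ j, m i j * ξ i * ξ j

/-- Local Hölder continuity on a set. -/
def LocallyHolderOn {E F : Type*} [PseudoMetricSpace E] [PseudoMetricSpace F]
    (f : E → F) (s : Set E) : Prop :=
  ∀ x ∈ s, ∃ (C r : NNReal), 0 < r ∧ r ≤ 1 ∧ ∃ ε > 0, HolderOnWith C r f (Metric.ball x ε ∩ s)

/-- Local Hölder continuity. -/
def LocallyHolder {E F : Type*} [PseudoMetricSpace E] [PseudoMetricSpace F] (f : E → F) : Prop :=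
  LocallyHolderOn f Set.univ

/-- The set of `λ ∈ ℝ` admitting a positive C² supersolution of `𝓛φ + Vφ ≤ λφ` on `D`. -/
def supersolutions {d : ℕ} (a : Euc d → Matrix (Fin d) (Fin d) ℝ) (b : Euc d → Euc d)
    (V : Euc d → ℝ) (D : Set (Euc d)) : Set ℝ :=
  {lam | ∃ φ : Euc d → ℝ, (∀ x ∈ D, 0 < φ x) ∧ ContDiffOn ℝ 2 φ D ∧
    ∀ x ∈ D, Lop a b φ x + V x * φ x ≤ lam * φ x}

/-- The generalized principal eigenvalue `λ*(𝓛,V)` on `D`. -/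
def lamStar {d : ℕ} (a : Euc d → Matrix (Fin d) (Fin d) ℝ) (b : Euc d → Euc d)
    (V : Euc d → ℝ) (D : Set (Euc d)) : ℝ :=
  sInf (supersolutions a b V D)

/-- `λ*(𝓛,V)` is finite: the defining set is nonempty and bounded below. -/
def lamStarFinite {d : ℕ} (a : Euc d → Matrix (Fin d) (Fin d) ℝ) (b : Euc d → Euc d)
    (V : Euc d → ℝ) (D : Set (Euc d)) : Prop :=
  (supersolutions a b V D).Nonempty ∧ BddBelow (supersolutions a b V D)

/-- A ground state of `𝓛 + W` in the open connected set `D`: a positive C² solution of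
minimal growth at infinity. -/
def IsGroundState {d : ℕ} (a : Euc d → Matrix (Fin d) (Fin d) ℝ) (b : Euc d → Euc d)
    (W : Euc d → ℝ) (u : Euc d → ℝ) (D : Set (Euc d)) : Prop :=
  (∀ x ∈ D, 0 < u x) ∧ ContDiffOn ℝ 2 u D ∧ (∀ x ∈ D, Lop a b u x + W x * u x = 0) ∧
  ∀ K : Set (Euc d), IsCompact K → K ⊆ D →
    ∀ v : Euc d → ℝ, ContDiffOn ℝ 2 v (D \ K) → (∀ x ∈ D \ K, 0 < v x) →
      (∀ x ∈ D \ K, Lop a b v x + W x * v x ≤ 0) →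
      ∃ K' : Set (Euc d), IsCompact K' ∧ K ⊆ K' ∧ K' ⊆ D ∧
        ∃ κ > 0, ∀ x ∈ D \ K', κ * u x ≤ v x

/-- Membership in `C₀⁺(ℝ^d)`: continuous, nonnegative, not identically zero, vanishing
at infinity. -/
def C0plus {d : ℕ} (h : Euc d → ℝ) : Prop :=
  Continuous h ∧ (∀ x, 0 ≤ h x) ∧ (∃ x, h x ≠ 0) ∧ Tendsto h (cocompact (Euc d)) (nhds 0)

/-- `λ*` is strictly monotone at `V` on the right. -/
def StrictMonoRight {d : ℕ} (a : Euc d → Matrix (Fin d) (Fin d) ℝ) (b : Euc d → Euc d)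
    (V : Euc d → ℝ) : Prop :=
  ∀ h : Euc d → ℝ, C0plus h →
    lamStar a b V Set.univ < lamStar a b (fun x => V x + h x) Set.univ

/-- `λ*` is strictly monotone at `V` (on both sides). -/
def StrictMonoAt {d : ℕ} (a : Euc d → Matrix (Fin d) (Fin d) ℝ) (b : Euc d → Euc d)
    (V : Euc d → ℝ) : Prop :=
  ∀ h : Euc d → ℝ, C0plus h →
    lamStar a b (fun x => V x - h x) Set.univ < lamStar a b V Set.univ ∧
    lamStar a b V Set.univ < lamStar a b (fun x => V x + h x) Set.univ

/-- Standing assumptions (A1)–(A3) with `b` Borel measurable and locally bounded. -/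
structure StandingB {d : ℕ} (a : Euc d → Matrix (Fin d) (Fin d) ℝ) (b : Euc d → Euc d) : Prop where
  posdef : ∀ x, (a x).PosDef
  aLip : ∀ R > 0, ∃ C > 0, ∀ x y : Euc d, ‖x‖ ≤ R → ‖y‖ ≤ R →
    frob (a x - a y) ≤ C * ‖x - y‖
  bMeas : Measurable b
  bLocBdd : ∀ R > 0, ∃ C, ∀ x : Euc d, ‖x‖ ≤ R → ‖b x‖ ≤ C
  nondeg : ∀ R > 0, ∃ C > 0, ∀ x : Euc d, ‖x‖ ≤ R → ∀ ξ : Euc d,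
    C⁻¹ * ‖ξ‖ ^ 2 ≤ quadForm (a x) ξ
  growth : ∃ C₀ > 0, ∀ x : Euc d,
    max (∑ i, b x i * x i) 0 + frob (a x) ≤ C₀ * (1 + ‖x‖ ^ 2)

/-- Standing assumptions (A1)–(A3) with `b` locally Hölder continuous. -/
structure StandingH {d : ℕ} (a : Euc d → Matrix (Fin d) (Fin d) ℝ) (b : Euc d → Euc d) : Prop where
  posdef : ∀ x, (a x).PosDef
  aLip : ∀ R > 0, ∃ C > 0, ∀ x y : Euc d, ‖x‖ ≤ R → ‖y‖ ≤ R →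
    frob (a x - a y) ≤ C * ‖x - y‖
  bHolder : LocallyHolder b
  nondeg : ∀ R > 0, ∃ C > 0, ∀ x : Euc d, ‖x‖ ≤ R → ∀ ξ : Euc d,
    C⁻¹ * ‖ξ‖ ^ 2 ≤ quadForm (a x) ξ
  growth : ∃ C₀ > 0, ∀ x : Euc d,
    max (∑ i, b x i * x i) 0 + frob (a x) ≤ C₀ * (1 + ‖x‖ ^ 2)

/-!
Put `W = V₂ - λ₁*`. Minimal growth of `Ψ₁` and `Ψ ≤ C Ψ₁` make `Ψ` dominated at infinity, up to a
constant, by every positive strict supersolution of `𝓛₂ + W` near infinity, and the maximum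
principle sharpens this to a comparison principle outside balls. Strict monotonicity on the left at
`V₁` supplies such a strict supersolution `φ`, with some rate `δ`. If `w` is a positive
supersolution of `𝓛₂ + W - η`, then `φ ^ κ w ^ (1 - κ)` is a strict supersolution as soon as
`(1 - κ) η < κ δ`, so `Ψ ≤ w + κ φ` outside a large ball once `w` is scaled to touch `Ψ` from above
in that ball. Letting `η, κ → 0`, the functions `w + κ φ - Ψ` are nonnegative, nearly
supersolutions, and nearly vanish somewhere in the ball; the strong maximum principle forces
`𝓛₂Ψ + WΨ = 0` and `Ψ ≥ 0`, hence `Ψ > 0`.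

The same argument with `W + h` for `W`, where `h ≥ 0`, is contradictory unless `h = 0`, because
`Ψ > 0` already solves the equation with `h = 0`. This is strict monotonicity on the right, and
constant `h` give `λ₁* = λ₂*`. On the left, a perturbation `Ψ (1 - ε q)` is a supersolution for
`W - h` which is strict on a prescribed ball, and adding a small multiple of `φ` makes it strict
everywhere.
-/

section OneVariable

lemma deriv_deriv_nonpos_of_isLocalMax {f : ℝ → ℝ} {t : ℝ} (hmax : IsLocalMax f t)
    (hf : ContinuousAt f t) : deriv (deriv f) t ≤ 0 := by
  by_contra! hpos
  have hmin : IsLocalMin f t := isLocalMin_of_deriv_deriv_pos hpos hmax.deriv_eq_zero hf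
  have hconst : f =ᶠ[nhds t] fun _ => f t := by
    filter_upwards [hmin, hmax] with s h₁ h₂ using le_antisymm h₂ h₁
  simp [hconst.deriv.deriv_eq] at hpos

lemma hasDerivAt_max_zero_pow (n : ℕ) (t : ℝ) :
    HasDerivAt (fun t : ℝ => max t 0 ^ (n + 2)) (((n : ℝ) + 2) * max t 0 ^ (n + 1)) t := by
  have hcont (m : ℕ) : Continuous fun t : ℝ => max t 0 ^ m := by fun_prop
  refine hasDerivAt_of_hasDerivAt_of_ne' (g := fun t => ((n : ℝ) + 2) * max t 0 ^ (n + 1))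
    (x := 0) (fun s hs => ?_) (hcont _).continuousAt
    (continuous_const.mul (hcont _)).continuousAt t
  rcases hs.lt_or_gt with hs | hs
  · have hzero : (fun t : ℝ => max t 0 ^ (n + 2)) =ᶠ[nhds s] fun _ => 0 := by
      filter_upwards [Iio_mem_nhds hs] with r hr
      rw [max_eq_right (le_of_lt hr), zero_pow (by omega)]
    rw [max_eq_right hs.le, zero_pow (by omega), mul_zero]
    exact (hasDerivAt_const s (0 : ℝ)).congr_of_eventuallyEq hzero
  · have hpow : (fun t : ℝ => max t 0 ^ (n + 2)) =ᶠ[nhds s] fun t => t ^ (n + 2) := by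
      filter_upwards [Ioi_mem_nhds hs] with r hr
      rw [max_eq_left (le_of_lt hr)]
    rw [max_eq_left hs.le]
    simpa using (hasDerivAt_pow (n + 2) s).congr_of_eventuallyEq hpow

lemma deriv_max_zero_pow (n : ℕ) :
    deriv (fun t : ℝ => max t 0 ^ (n + 2)) = fun t => ((n : ℝ) + 2) * max t 0 ^ (n + 1) :=
  funext fun t => (hasDerivAt_max_zero_pow n t).deriv

lemma contDiff_one_max_zero_pow (n : ℕ) : ContDiff ℝ 1 fun t : ℝ => max t 0 ^ (n + 2) := by
  rw [contDiff_one_iff_deriv, deriv_max_zero_pow]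
  exact ⟨fun t => (hasDerivAt_max_zero_pow n t).differentiableAt, by fun_prop⟩

lemma contDiff_two_max_zero_pow (n : ℕ) : ContDiff ℝ 2 fun t : ℝ => max t 0 ^ (n + 3) := by
  rw [show (2 : WithTop ℕ∞) = 1 + 1 by norm_num, contDiff_succ_iff_deriv,
    deriv_max_zero_pow (n + 1)]
  exact ⟨fun t => (hasDerivAt_max_zero_pow (n + 1) t).differentiableAt, by simp,
    contDiff_const.mul (contDiff_one_max_zero_pow n)⟩

end OneVariable

section Compactness

variable {X : Type*} [TopologicalSpace X] {K : Set X} {f g : X → ℝ}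

lemma eventually_forall_mul_lt (hK : IsCompact K) (hf : ContinuousOn f K) (hg : ContinuousOn g K)
    (hpos : ∀ x ∈ K, 0 < f x) : ∀ᶠ ε in nhdsWithin (0 : ℝ) (Ioi 0), ∀ x ∈ K, ε * g x < f x := by
  obtain ⟨m, hm, hfm⟩ := hK.exists_forall_le' hf hpos
  obtain ⟨B, hB⟩ := hK.exists_bound_of_continuousOn hg
  have hlim : Tendsto (fun ε : ℝ => ε * B) (nhdsWithin 0 (Ioi 0)) (nhds 0) := by
    simpa using (tendsto_id.mul_const B).mono_left (nhdsWithin_le_nhds (a := (0 : ℝ)))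
  filter_upwards [hlim.eventually (gt_mem_nhds hm), self_mem_nhdsWithin] with ε hε hε0 x hx
  calc ε * g x ≤ ε * B := mul_le_mul_of_nonneg_left ((le_abs_self _).trans (hB x hx)) (le_of_lt hε0)
    _ < m := hε
    _ ≤ f x := hfm x hx

lemma exists_le_mul_and_eq_mul (hK : IsCompact K) (hf : ContinuousOn f K) (hg : ContinuousOn g K)
    (hpos : ∀ x ∈ K, 0 < g x) (hfpos : ∃ x ∈ K, 0 < f x) :
    ∃ A > 0, (∀ x ∈ K, f x ≤ A * g x) ∧ ∃ x ∈ K, f x = A * g x := by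
  obtain ⟨y, hy, hfy⟩ := hfpos
  obtain ⟨x, hx, hmax⟩ := hK.exists_isMaxOn ⟨y, hy⟩ (hf.div hg fun z hz => (hpos z hz).ne')
  have hratio : f y / g y ≤ f x / g x := hmax hy
  refine ⟨f x / g x, (div_pos hfy (hpos y hy)).trans_le hratio, fun z hz => ?_, x, hx, ?_⟩
  · exact (div_le_iff₀ (hpos z hz)).mp (hmax hz)
  · exact (div_mul_cancel₀ _ (hpos x hx).ne').symm

lemma exists_forall_mul_le_of_eventually_cocompact (hK : IsClosed K) (hf : ContinuousOn f K)
    (hg : ContinuousOn g K) (hpos : ∀ x ∈ K, 0 < f x) {κ : ℝ} (hκ : 0 < κ)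
    (hinf : ∀ᶠ x in cocompact X, x ∈ K → κ * g x ≤ f x) :
    ∃ ε > 0, ∀ x ∈ K, ε * g x ≤ f x := by
  obtain ⟨L, hL, hLK⟩ := mem_cocompact.mp hinf
  have hloc := eventually_forall_mul_lt (hL.inter_right hK) (hf.mono inter_subset_right)
    (hg.mono inter_subset_right) fun x hx => hpos x hx.2
  obtain ⟨ε, hεloc, hε0, hεκ⟩ := (hloc.and (Ioc_mem_nhdsGT hκ)).exists
  refine ⟨ε, hε0, fun x hx => ?_⟩
  by_cases hxL : x ∈ L
  · exact (hεloc x ⟨hxL, hx⟩).le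
  · rcases le_total (g x) 0 with hg0 | hg0
    · exact (mul_nonpos_of_nonneg_of_nonpos hε0.le hg0).trans (hpos x hx).le
    · exact (mul_le_mul_of_nonneg_right hεκ hg0).trans (hLK hxL hx)

end Compactness

/-- The carré du champ `Γ(u, v) = Σ aᶦʲ ∂ᵢu ∂ⱼv` of the second-order part of `Lop a b`. -/
def carreDuChamp {d : ℕ} (a : Euc d → Matrix (Fin d) (Fin d) ℝ) (u v : Euc d → ℝ) (x : Euc d) : ℝ :=
  ∑ i, ∑ j, a x i j * pd u i x * pd v j x

section Calculus

variable {d : ℕ} {a : Euc d → Matrix (Fin d) (Fin d) ℝ} {b : Euc d → Euc d}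
  {u v : Euc d → ℝ} {x : Euc d} {g g' : ℝ → ℝ} {g'' : ℝ}

lemma eventually_differentiableAt_of_contDiffAt_two (hu : ContDiffAt ℝ 2 u x) :
    ∀ᶠ y in nhds x, DifferentiableAt ℝ u y := by
  filter_upwards [hu.eventually (by simp)] with y hy
  exact hy.differentiableAt (by norm_num)

lemma contDiffAt_pd (hu : ContDiffAt ℝ 2 u x) (j : Fin d) : ContDiffAt ℝ 1 (pd u j) x :=
  (hu.fderiv_right (by norm_num)).clm_apply contDiffAt_const

lemma differentiableAt_pd (hu : ContDiffAt ℝ 2 u x) (j : Fin d) : DifferentiableAt ℝ (pd u j) x :=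
  (contDiffAt_pd hu j).differentiableAt (by norm_num)

lemma pd_congr (h : u =ᶠ[nhds x] v) (i : Fin d) : pd u i x = pd v i x := by
  rw [pd, pd, h.fderiv_eq]

lemma pd_add (hu : DifferentiableAt ℝ u x) (hv : DifferentiableAt ℝ v x) (i : Fin d) :
    pd (fun y => u y + v y) i x = pd u i x + pd v i x := by
  simp [pd, fderiv_fun_add hu hv]

lemma pd_mul (hu : DifferentiableAt ℝ u x) (hv : DifferentiableAt ℝ v x) (i : Fin d) :
    pd (fun y => u y * v y) i x = u x * pd v i x + v x * pd u i x := by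
  simp [pd, fderiv_fun_mul hu hv]

lemma pd_comp {c : ℝ} (hg : HasDerivAt g c (u x)) (hu : DifferentiableAt ℝ u x) (i : Fin d) :
    pd (fun y => g (u y)) i x = c * pd u i x := by
  have h : HasFDerivAt (fun y => g (u y)) (c • fderiv ℝ u x) x :=
    hg.comp_hasFDerivAt x hu.hasFDerivAt
  simp [pd, h.fderiv]

lemma pd2_eq_pd_pd (u : Euc d → ℝ) (i j : Fin d) : pd2 u i j = pd (pd u j) i := rfl

lemma pd2_add (hu : ContDiffAt ℝ 2 u x) (hv : ContDiffAt ℝ 2 v x) (i j : Fin d) :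
    pd2 (fun y => u y + v y) i j x = pd2 u i j x + pd2 v i j x := by
  have h : pd (fun y => u y + v y) j =ᶠ[nhds x] fun y => pd u j y + pd v j y := by
    filter_upwards [eventually_differentiableAt_of_contDiffAt_two hu,
      eventually_differentiableAt_of_contDiffAt_two hv] with y hu hv using pd_add hu hv j
  simp only [pd2_eq_pd_pd]
  rw [pd_congr h, pd_add (differentiableAt_pd hu j) (differentiableAt_pd hv j)]

lemma pd2_mul (hu : ContDiffAt ℝ 2 u x) (hv : ContDiffAt ℝ 2 v x) (i j : Fin d) :
    pd2 (fun y => u y * v y) i j x =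
      u x * pd2 v i j x + v x * pd2 u i j x + pd u i x * pd v j x + pd v i x * pd u j x := by
  have h : pd (fun y => u y * v y) j =ᶠ[nhds x] fun y => u y * pd v j y + v y * pd u j y := by
    filter_upwards [eventually_differentiableAt_of_contDiffAt_two hu,
      eventually_differentiableAt_of_contDiffAt_two hv] with y hu hv using pd_mul hu hv j
  have hu₁ := hu.differentiableAt (by norm_num)
  have hv₁ := hv.differentiableAt (by norm_num)
  have hu₂ := differentiableAt_pd hu j
  have hv₂ := differentiableAt_pd hv j
  simp only [pd2_eq_pd_pd]
  rw [pd_congr h, pd_add (hu₁.fun_mul hv₂) (hv₁.fun_mul hu₂), pd_mul hu₁ hv₂, pd_mul hv₁ hu₂]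
  ring

lemma pd2_comp (hg : ∀ᶠ t in nhds (u x), HasDerivAt g (g' t) t)
    (hg' : HasDerivAt g' g'' (u x)) (hu : ContDiffAt ℝ 2 u x) (i j : Fin d) :
    pd2 (fun y => g (u y)) i j x = g' (u x) * pd2 u i j x + g'' * (pd u i x * pd u j x) := by
  have h : pd (fun y => g (u y)) j =ᶠ[nhds x] fun y => g' (u y) * pd u j y := by
    filter_upwards [eventually_differentiableAt_of_contDiffAt_two hu,
      hu.continuousAt.eventually hg] with y hu hg using pd_comp hg hu j
  have hu₁ := hu.differentiableAt (by norm_num)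
  have hg'u : DifferentiableAt ℝ (fun y => g' (u y)) x := hg'.differentiableAt.comp x hu₁
  simp only [pd2_eq_pd_pd]
  rw [pd_congr h, pd_mul hg'u (differentiableAt_pd hu j), pd_comp hg' hu₁]
  ring

lemma carreDuChamp_comp_left {c : ℝ} (hg : HasDerivAt g c (u x)) (hu : DifferentiableAt ℝ u x) :
    carreDuChamp a (fun y => g (u y)) v x = c * carreDuChamp a u v x := by
  simp only [carreDuChamp, pd_comp hg hu, Finset.mul_sum]
  exact Finset.sum_congr rfl fun i _ => Finset.sum_congr rfl fun j _ => by ring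

lemma carreDuChamp_comp_right {c : ℝ} (hg : HasDerivAt g c (u x)) (hu : DifferentiableAt ℝ u x) :
    carreDuChamp a v (fun y => g (u y)) x = c * carreDuChamp a v u x := by
  simp only [carreDuChamp, pd_comp hg hu, Finset.mul_sum]
  exact Finset.sum_congr rfl fun i _ => Finset.sum_congr rfl fun j _ => by ring

lemma Lop_congr_coeff {a' : Euc d → Matrix (Fin d) (Fin d) ℝ} {b' : Euc d → Euc d}
    (ha : a x = a' x) (hb : b x = b' x) : Lop a b u x = Lop a' b' u x := by
  simp only [Lop, ha, hb]

lemma Lop_add (hu : ContDiffAt ℝ 2 u x) (hv : ContDiffAt ℝ 2 v x) :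
    Lop a b (fun y => u y + v y) x = Lop a b u x + Lop a b v x := by
  simp only [Lop, pd2_add hu hv, pd_add (hu.differentiableAt (by norm_num))
    (hv.differentiableAt (by norm_num)), mul_add, Finset.sum_add_distrib]
  ring

lemma Lop_mul (hu : ContDiffAt ℝ 2 u x) (hv : ContDiffAt ℝ 2 v x) :
    Lop a b (fun y => u y * v y) x =
      u x * Lop a b v x + v x * Lop a b u x + carreDuChamp a u v x + carreDuChamp a v u x := by
  simp only [Lop, carreDuChamp, pd2_mul hu hv, pd_mul (hu.differentiableAt (by norm_num))
    (hv.differentiableAt (by norm_num)), mul_add, Finset.sum_add_distrib, Finset.mul_sum]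
  simp only [← mul_assoc, mul_comm (u x), mul_comm (v x), mul_right_comm _ _ (u x),
    mul_right_comm _ _ (v x)]
  ring

lemma Lop_comp (hg : ∀ᶠ t in nhds (u x), HasDerivAt g (g' t) t)
    (hg' : HasDerivAt g' g'' (u x)) (hu : ContDiffAt ℝ 2 u x) :
    Lop a b (fun y => g (u y)) x = g' (u x) * Lop a b u x + g'' * carreDuChamp a u u x := by
  simp only [Lop, carreDuChamp, pd2_comp hg hg' hu, pd_comp hg.self_of_nhds
    (hu.differentiableAt (by norm_num)), mul_add, Finset.sum_add_distrib, Finset.mul_sum]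
  simp only [mul_left_comm _ (g' (u x)), mul_left_comm _ g'', ← mul_assoc]
  ring

lemma Lop_const_mul (c : ℝ) (hu : ContDiffAt ℝ 2 u x) :
    Lop a b (fun y => c * u y) x = c * Lop a b u x := by
  have h := Lop_comp (a := a) (b := b) (g := fun t => c * t) (g' := fun _ => c)
    (Eventually.of_forall fun t => by simpa using (hasDerivAt_id t).const_mul c)
    (hasDerivAt_const _ _) hu
  simpa only [zero_mul, add_zero] using h

lemma Lop_sub (hu : ContDiffAt ℝ 2 u x) (hv : ContDiffAt ℝ 2 v x) :
    Lop a b (fun y => u y - v y) x = Lop a b u x - Lop a b v x := by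
  have hneg : ContDiffAt ℝ 2 (fun y => -1 * v y) x := contDiffAt_const.mul hv
  have h := Lop_add (a := a) (b := b) hu hneg
  rw [Lop_const_mul _ hv] at h
  simpa only [neg_one_mul, ← sub_eq_add_neg] using h

lemma Lop_congr (h : u =ᶠ[nhds x] v) : Lop a b u x = Lop a b v x := by
  have hpd (j : Fin d) : pd u j =ᶠ[nhds x] pd v j :=
    h.eventually_nhds.mono fun y hy => pd_congr hy j
  simp only [Lop, pd2_eq_pd_pd, fun i => pd_congr h i, fun i j => pd_congr (hpd j) i]

/-- For concave `g` the perspective `s g(w / s)` of two supersolutions `s` and `w` is again one: the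
term with the carré du champ has a sign, and the others form the perspective at `(𝓛s, 𝓛w)`
linearised at `(s, w)`. -/
lemma Lop_perspective {s w : Euc d → ℝ} (hs : ContDiffAt ℝ 2 s x) (hw : ContDiffAt ℝ 2 w x)
    (hs0 : s x ≠ 0) (hg2 : ContDiffAt ℝ 2 g (w x / s x))
    (hg : ∀ᶠ t in nhds (w x / s x), HasDerivAt g (g' t) t)
    (hg' : HasDerivAt g' g'' (w x / s x)) :
    Lop a b (fun y => s y * g (w y / s y)) x =
      g' (w x / s x) * Lop a b w x + (g (w x / s x) - w x / s x * g' (w x / s x)) * Lop a b s x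
        + s x * g'' * carreDuChamp a (fun y => w y / s y) (fun y => w y / s y) x := by
  have hu : ContDiffAt ℝ 2 (fun y => w y / s y) x := hw.div hs hs0
  have hu₁ := hu.differentiableAt (by norm_num)
  have hgu : ContDiffAt ℝ 2 (fun y => g (w y / s y)) x := hg2.comp x hu
  have hcancel : w =ᶠ[nhds x] fun y => s y * (w y / s y) := by
    filter_upwards [hs.continuousAt.eventually_ne hs0] with y hy
    exact (mul_div_cancel₀ _ hy).symm
  rw [Lop_congr hcancel, Lop_mul hs hgu, Lop_mul hs hu, Lop_comp hg hg' hu,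
    carreDuChamp_comp_left hg.self_of_nhds hu₁, carreDuChamp_comp_right hg.self_of_nhds hu₁]
  ring

end Calculus

section MaximumPrinciple

variable {d : ℕ} {a : Euc d → Matrix (Fin d) (Fin d) ℝ} {b : Euc d → Euc d}
  {u : Euc d → ℝ} {x : Euc d}

lemma quadForm_eq_dotProduct_mulVec (m : Matrix (Fin d) (Fin d) ℝ) (ξ : Euc d) :
    quadForm m ξ = ξ.ofLp ⬝ᵥ m.mulVec ξ.ofLp := by
  simp only [quadForm, dotProduct, Matrix.mulVec, Finset.mul_sum]
  exact Finset.sum_congr rfl fun i _ => Finset.sum_congr rfl fun j _ => by ring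

lemma quadForm_nonneg {m : Matrix (Fin d) (Fin d) ℝ} (hm : m.PosSemidef) (ξ : Euc d) :
    0 ≤ quadForm m ξ := by
  simpa [quadForm_eq_dotProduct_mulVec] using hm.dotProduct_mulVec_nonneg ξ.ofLp

lemma quadForm_pos {m : Matrix (Fin d) (Fin d) ℝ} (hm : m.PosDef) {ξ : Euc d} (hξ : ξ ≠ 0) :
    0 < quadForm m ξ := by
  have hξ' : ξ.ofLp ≠ 0 := fun h => hξ (by ext i; simp [h])
  simpa [quadForm_eq_dotProduct_mulVec] using hm.dotProduct_mulVec_pos hξ'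

lemma carreDuChamp_self_nonneg (ha : (a x).PosSemidef) : 0 ≤ carreDuChamp a u u x :=
  quadForm_nonneg ha (WithLp.toLp 2 fun i => pd u i x)

lemma fderiv_apply_eq_sum (u : Euc d → ℝ) (x ξ : Euc d) :
    fderiv ℝ u x ξ = ∑ j, ξ j * pd u j x := by
  conv_lhs => rw [← (EuclideanSpace.basisFun (Fin d) ℝ).sum_repr ξ]
  simp [pd, map_sum]

lemma hasDerivAt_along_line (ξ : Euc d) {t : ℝ} (hu : DifferentiableAt ℝ u (x + t • ξ)) :
    HasDerivAt (fun t : ℝ => u (x + t • ξ)) (∑ j, ξ j * pd u j (x + t • ξ)) t := by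
  have hline : HasDerivAt (fun t : ℝ => x + t • ξ) ξ t := by
    simpa using ((hasDerivAt_id t).smul_const ξ).const_add x
  rw [← fderiv_apply_eq_sum]
  exact hu.hasFDerivAt.comp_hasDerivAt t hline

lemma deriv_deriv_along_line (ξ : Euc d) (hu : ContDiffAt ℝ 2 u x) :
    deriv (deriv fun t : ℝ => u (x + t • ξ)) 0 = ∑ i, ∑ j, pd2 u i j x * ξ i * ξ j := by
  have hline : Tendsto (fun t : ℝ => x + t • ξ) (nhds 0) (nhds x) :=
    Continuous.tendsto' (by fun_prop) 0 x (by simp)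
  have hfirst : deriv (fun t : ℝ => u (x + t • ξ)) =ᶠ[nhds 0]
      fun t => ∑ j, ξ j * pd u j (x + t • ξ) := by
    filter_upwards [hline.eventually (eventually_differentiableAt_of_contDiffAt_two hu)] with t ht
    exact (hasDerivAt_along_line ξ ht).deriv
  have hsecond : HasDerivAt (fun t : ℝ => ∑ j, ξ j * pd u j (x + t • ξ))
      (∑ j, ξ j * ∑ i, ξ i * pd2 u i j x) 0 := by
    refine HasDerivAt.fun_sum fun j _ => HasDerivAt.const_mul _ ?_
    have hj : DifferentiableAt ℝ (pd u j) (x + (0 : ℝ) • ξ) := by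
      simpa using differentiableAt_pd hu j
    simpa [pd2_eq_pd_pd] using hasDerivAt_along_line ξ hj
  rw [hfirst.deriv_eq, hsecond.deriv, Finset.sum_comm]
  simp only [Finset.mul_sum]
  exact Finset.sum_congr rfl fun j _ => Finset.sum_congr rfl fun i _ => by ring

lemma pd_eq_zero_of_isLocalMax (h : IsLocalMax u x) (i : Fin d) : pd u i x = 0 := by
  simp [pd, h.fderiv_eq_zero]

lemma hessian_nonpos_of_isLocalMax (h : IsLocalMax u x) (hu : ContDiffAt ℝ 2 u x) (ξ : Euc d) :
    ∑ i, ∑ j, pd2 u i j x * ξ i * ξ j ≤ 0 := by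
  have hline : Tendsto (fun t : ℝ => x + t • ξ) (nhds 0) (nhds x) :=
    Continuous.tendsto' (by fun_prop) 0 x (by simp)
  rw [← deriv_deriv_along_line ξ hu]
  refine deriv_deriv_nonpos_of_isLocalMax ?_ ?_
  · simpa [IsLocalMax, IsMaxFilter] using hline.eventually h
  · exact (hasDerivAt_along_line ξ
      (by simpa using hu.differentiableAt (by norm_num))).continuousAt

lemma Lop_nonpos_of_isLocalMax (ha : (a x).PosSemidef) (h : IsLocalMax u x)
    (hu : ContDiffAt ℝ 2 u x) : Lop a b u x ≤ 0 := by
  obtain ⟨m, ξ, hξ⟩ := Matrix.posSemidef_iff_eq_sum_vecMulVec.mp ha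
  have hrank_one : Lop a b u x = ∑ k, ∑ i, ∑ j, pd2 u i j x * ξ k i * ξ k j := by
    simp only [Lop, pd_eq_zero_of_isLocalMax h, mul_zero, Finset.sum_const_zero, add_zero, hξ,
      Matrix.sum_apply, Matrix.vecMulVec_apply, Finset.sum_mul]
    refine (Finset.sum_congr rfl fun _ _ => Finset.sum_comm).trans (Finset.sum_comm.trans ?_)
    exact Finset.sum_congr rfl fun k _ => Finset.sum_congr rfl fun i _ =>
      Finset.sum_congr rfl fun j _ => by simp only [Pi.star_apply, star_trivial]; ring
  rw [hrank_one]
  exact Finset.sum_nonpos fun k _ => hessian_nonpos_of_isLocalMax h hu (WithLp.toLp 2 (ξ k))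

lemma le_of_Lop_pos {K : Set (Euc d)} {κ : ℝ} (ha : ∀ x, (a x).PosSemidef) (hK : IsCompact K)
    (hu : ContDiff ℝ 2 u) (hpos : ∀ x ∈ K, κ < u x → K ∈ nhds x ∧ 0 < Lop a b u x) :
    ∀ x ∈ K, u x ≤ κ := by
  by_contra! hexc
  obtain ⟨y, hy, hκy⟩ := hexc
  obtain ⟨x, hx, hmax⟩ := hK.exists_isMaxOn ⟨y, hy⟩ hu.continuous.continuousOn
  obtain ⟨hnhds, hLx⟩ := hpos x hx (hκy.trans_le (hmax hy))
  exact hLx.not_ge (Lop_nonpos_of_isLocalMax (ha x) (hmax.isLocalMax hnhds) hu.contDiffAt)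

end MaximumPrinciple

section Coefficients

variable {d : ℕ} {a : Euc d → Matrix (Fin d) (Fin d) ℝ} {b : Euc d → Euc d} {u v : Euc d → ℝ}

/-- An elliptic operator with continuous coefficients: by compactness, all that is needed for
maximum principles on bounded sets. -/
structure ContinuousElliptic (a : Euc d → Matrix (Fin d) (Fin d) ℝ) (b : Euc d → Euc d) :
    Prop where
  posDef : ∀ x, (a x).PosDef
  continuous_coeff : Continuous a
  continuous_drift : Continuous b

lemma LocallyHolder.continuous {E F : Type*} [PseudoMetricSpace E] [PseudoMetricSpace F]
    {f : E → F} (hf : LocallyHolder f) : Continuous f := by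
  rw [continuous_iff_continuousAt]
  intro x
  obtain ⟨C, r, hr, -, ε, hε, hball⟩ := hf x (mem_univ x)
  rw [inter_univ] at hball
  exact (hball.continuousOn hr).continuousAt (ball_mem_nhds x hε)

lemma abs_apply_le_frob (m : Matrix (Fin d) (Fin d) ℝ) (i j : Fin d) : |m i j| ≤ frob m := by
  refine Real.abs_le_sqrt ?_
  calc m i j ^ 2 ≤ ∑ j, m i j ^ 2 :=
        Finset.single_le_sum (f := fun j => m i j ^ 2) (fun _ _ => sq_nonneg _) (Finset.mem_univ j)
    _ ≤ ∑ i, ∑ j, m i j ^ 2 :=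
        Finset.single_le_sum (f := fun i => ∑ j, m i j ^ 2)
          (fun _ _ => Finset.sum_nonneg fun _ _ => sq_nonneg _) (Finset.mem_univ i)

lemma StandingH.continuousElliptic (h : StandingH a b) : ContinuousElliptic a b where
  posDef := h.posdef
  continuous_drift := h.bHolder.continuous
  continuous_coeff := continuous_matrix fun i j => by
    rw [continuous_iff_continuousAt]
    intro x
    obtain ⟨C, -, hlip⟩ := h.aLip (‖x‖ + 1) (by positivity)
    refine continuousAt_of_locally_lipschitz zero_lt_one C fun y hy => ?_
    rw [dist_eq_norm] at hy
    have hy' : ‖y‖ ≤ ‖x‖ + 1 := (norm_le_norm_add_norm_sub' y x).trans (by gcongr)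
    rw [Real.dist_eq, dist_eq_norm]
    exact (abs_apply_le_frob (a y - a x) i j).trans (hlip y x hy' (by linarith))

lemma continuous_pd (hu : ContDiff ℝ 2 u) (i : Fin d) : Continuous (pd u i) :=
  (hu.continuous_fderiv (by norm_num)).clm_apply continuous_const

lemma continuous_pd2 (hu : ContDiff ℝ 2 u) (i j : Fin d) : Continuous (pd2 u i j) :=
  have hj : ContDiff ℝ 1 (pd u j) :=
    contDiff_iff_contDiffAt.mpr fun _ => contDiffAt_pd hu.contDiffAt j
  (hj.continuous_fderiv (by norm_num)).clm_apply continuous_const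

lemma ContinuousElliptic.continuous_Lop (h : ContinuousElliptic a b) (hu : ContDiff ℝ 2 u) :
    Continuous (Lop a b u) := by
  have hb := h.continuous_drift
  refine (continuous_finsetSum _ fun i _ => continuous_finsetSum _ fun j _ => ?_).add
    (continuous_finsetSum _ fun i _ => ?_)
  · exact (h.continuous_coeff.matrix_elem i j).mul (continuous_pd2 hu i j)
  · exact (show Continuous fun x => b x i by fun_prop).mul (continuous_pd hu i)

lemma ContinuousElliptic.continuous_carreDuChamp (h : ContinuousElliptic a b)
    (hu : ContDiff ℝ 2 u) (hv : ContDiff ℝ 2 v) : Continuous (carreDuChamp a u v) :=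
  continuous_finsetSum _ fun i _ => continuous_finsetSum _ fun j _ =>
    ((h.continuous_coeff.matrix_elem i j).mul (continuous_pd hu i)).mul (continuous_pd hv j)

end Coefficients

section Barrier

variable {d : ℕ} {a : Euc d → Matrix (Fin d) (Fin d) ℝ} {b : Euc d → Euc d}

/-- The concave paraboloid centred at `x₀`, equal to `1` at `x₀` and positive exactly on the ball
of radius `ρ`. -/
def paraboloid (x₀ : Euc d) (ρ : ℝ) (x : Euc d) : ℝ := 1 - (ρ ^ 2)⁻¹ * ‖x - x₀‖ ^ 2

lemma contDiff_paraboloid (x₀ : Euc d) (ρ : ℝ) : ContDiff ℝ 2 (paraboloid x₀ ρ) :=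
  contDiff_const.sub (contDiff_const.mul ((contDiff_id.sub contDiff_const).norm_sq ℝ))

lemma paraboloid_le_one (x₀ : Euc d) (ρ : ℝ) (x : Euc d) : paraboloid x₀ ρ x ≤ 1 :=
  sub_le_self _ (by positivity)

lemma paraboloid_pos_iff {x₀ x : Euc d} {ρ : ℝ} (hρ : 0 < ρ) :
    0 < paraboloid x₀ ρ x ↔ dist x x₀ < ρ := by
  rw [paraboloid, sub_pos, inv_mul_lt_one₀ (by positivity), dist_eq_norm,
    sq_lt_sq₀ (norm_nonneg _) hρ.le]

lemma pd_paraboloid (x₀ : Euc d) (ρ : ℝ) (i : Fin d) (x : Euc d) :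
    pd (paraboloid x₀ ρ) i x = -(2 * (ρ ^ 2)⁻¹) * (x - x₀) i := by
  have h : HasFDerivAt (paraboloid x₀ ρ)
      (-((ρ ^ 2)⁻¹ • ((2 : ℕ) • (innerSL ℝ (x - x₀))))) x :=
    (((hasStrictFDerivAt_norm_sq (x - x₀)).hasFDerivAt.comp x
      ((hasFDerivAt_id x).sub_const x₀)).const_mul _).const_sub _
  rw [pd, h.fderiv]
  simp [EuclideanSpace.inner_single_right]
  ring

lemma carreDuChamp_paraboloid_pos {x₀ x : Euc d} {ρ : ℝ} (ha : (a x).PosDef) (hρ : 0 < ρ)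
    (hx : x ≠ x₀) : 0 < carreDuChamp a (paraboloid x₀ ρ) (paraboloid x₀ ρ) x := by
  have h : carreDuChamp a (paraboloid x₀ ρ) (paraboloid x₀ ρ) x =
      (2 * (ρ ^ 2)⁻¹) ^ 2 * quadForm (a x) (x - x₀) := by
    simp only [carreDuChamp, pd_paraboloid, quadForm, Finset.mul_sum]
    exact Finset.sum_congr rfl fun i _ => Finset.sum_congr rfl fun j _ => by ring
  rw [h]
  exact mul_pos (by positivity) (quadForm_pos ha (sub_ne_zero.mpr hx))

lemma Lop_max_zero_pow {u : Euc d → ℝ} {x : Euc d} (hu : ContDiffAt ℝ 2 u x) (n : ℕ) :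
    Lop a b (fun y => max (u y) 0 ^ (n + 3)) x = ((n : ℝ) + 3) * max (u x) 0 ^ (n + 1) *
      (max (u x) 0 * Lop a b u x + ((n : ℝ) + 2) * carreDuChamp a u u x) := by
  have hfirst (t : ℝ) : HasDerivAt (fun t : ℝ => max t 0 ^ (n + 3))
      (((n : ℝ) + 3) * max t 0 ^ (n + 2)) t :=
    (hasDerivAt_max_zero_pow (n + 1) t).congr_deriv (by push_cast; ring)
  have hsecond : HasDerivAt (fun t : ℝ => ((n : ℝ) + 3) * max t 0 ^ (n + 2))
      (((n : ℝ) + 3) * (((n : ℝ) + 2) * max (u x) 0 ^ (n + 1))) (u x) :=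
    (hasDerivAt_max_zero_pow n (u x)).const_mul _
  rw [Lop_comp (Eventually.of_forall hfirst) hsecond hu]
  ring

lemma mul_max_zero_pow_le_Lop {u : Euc d → ℝ} {x : Euc d} {M : ℝ} {n : ℕ}
    (hu : ContDiffAt ℝ 2 u x) (hu1 : u x ≤ 1) (hM : 0 ≤ M)
    (h : 0 < u x → M ≤ u x * Lop a b u x + ((n : ℝ) + 2) * carreDuChamp a u u x) :
    M * max (u x) 0 ^ (n + 3) ≤ Lop a b (fun y => max (u y) 0 ^ (n + 3)) x := by
  rw [Lop_max_zero_pow hu]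
  rcases le_or_gt (u x) 0 with hx | hx
  · simp [max_eq_right hx]
  rw [max_eq_left hx.le]
  have hsq : u x ^ 2 ≤ 1 := pow_le_one₀ hx.le hu1
  have hn : (1 : ℝ) ≤ (n : ℝ) + 3 := by linarith [n.cast_nonneg (α := ℝ)]
  calc M * u x ^ (n + 3) = 1 * u x ^ (n + 1) * (M * u x ^ 2) := by ring
    _ ≤ ((n : ℝ) + 3) * u x ^ (n + 1) * M :=
        mul_le_mul (by gcongr) (mul_le_of_le_one_right hM hsq) (by positivity) (by positivity)
    _ ≤ _ := mul_le_mul_of_nonneg_left (h hx) (by positivity)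

lemma ContinuousElliptic.exists_nat_le_mul_Lop_paraboloid (hell : ContinuousElliptic a b)
    (x₀ : Euc d) {r ρ : ℝ} (hr : 0 < r) (hρ : 0 < ρ) (M : ℝ) :
    ∃ n : ℕ, ∀ x, r ≤ dist x x₀ → dist x x₀ ≤ ρ →
      M ≤ paraboloid x₀ ρ x * Lop a b (paraboloid x₀ ρ) x
        + ((n : ℝ) + 2) * carreDuChamp a (paraboloid x₀ ρ) (paraboloid x₀ ρ) x := by
  have hp := contDiff_paraboloid x₀ ρ
  have hannulus : IsCompact (closedBall x₀ ρ ∩ {x | r ≤ dist x x₀}) :=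
    (isCompact_closedBall x₀ ρ).inter_right
      (isClosed_le continuous_const (continuous_id.dist continuous_const))
  obtain ⟨θ, hθ, hΓ⟩ := hannulus.exists_forall_le'
    (hell.continuous_carreDuChamp hp hp).continuousOn fun x hx =>
      carreDuChamp_paraboloid_pos (hell.posDef x) hρ (dist_pos.mp (hr.trans_le hx.2))
  obtain ⟨C, hC⟩ := (isCompact_closedBall x₀ ρ).exists_bound_of_continuousOn
    (f := fun x => paraboloid x₀ ρ x * Lop a b (paraboloid x₀ ρ) x)
    (hp.continuous.mul (hell.continuous_Lop hp)).continuousOn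
  obtain ⟨n, hn⟩ := exists_nat_gt ((C + M) / θ)
  rw [div_lt_iff₀ hθ] at hn
  refine ⟨n, fun x hrx hxρ => ?_⟩
  have hLop := neg_le_of_abs_le (hC x hxρ)
  have hcarre : ((n : ℝ) + 2) * θ ≤
      ((n : ℝ) + 2) * carreDuChamp a (paraboloid x₀ ρ) (paraboloid x₀ ρ) x :=
    mul_le_mul_of_nonneg_left (hΓ x ⟨hxρ, hrx⟩) (by positivity)
  linarith

/-- A high power `n` makes the second-derivative term, of order `n²`, dominate on the region
where the gradient of the paraboloid does not vanish. -/
lemma ContinuousElliptic.exists_barrier (hell : ContinuousElliptic a b) (x₀ : Euc d) {r ρ M : ℝ}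
    (hr : 0 < r) (hρ : 0 < ρ) (hM : 0 ≤ M) :
    ∃ q : Euc d → ℝ, ContDiff ℝ 2 q ∧ (∀ x, 0 ≤ q x ∧ q x ≤ 1) ∧
      (∀ x, 0 < q x ↔ dist x x₀ < ρ) ∧ ∀ x, r ≤ dist x x₀ → M * q x ≤ Lop a b q x := by
  obtain ⟨n, hn⟩ := hell.exists_nat_le_mul_Lop_paraboloid x₀ hr hρ M
  refine ⟨fun x => max (paraboloid x₀ ρ x) 0 ^ (n + 3),
    (contDiff_two_max_zero_pow n).comp (contDiff_paraboloid x₀ ρ),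
    fun x => ⟨pow_nonneg (le_max_right _ _) _,
      pow_le_one₀ (le_max_right _ _) (max_le (paraboloid_le_one x₀ ρ x) zero_le_one)⟩,
    fun x => ?_, fun x hx => ?_⟩
  · have h0 : 0 ≤ max (paraboloid x₀ ρ x) 0 := le_max_right _ _
    rw [(pow_nonneg h0 _).lt_iff_ne', pow_ne_zero_iff (by omega), ← h0.lt_iff_ne', lt_max_iff,
      paraboloid_pos_iff hρ]
    simp only [lt_irrefl, or_false]
  · exact mul_max_zero_pow_le_Lop (contDiff_paraboloid x₀ ρ).contDiffAt (paraboloid_le_one x₀ ρ x)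
      hM fun hpos => hn x hx ((paraboloid_pos_iff hρ).mp hpos).le

end Barrier

section Propagation

variable {d : ℕ} {a : Euc d → Matrix (Fin d) (Fin d) ℝ} {b : Euc d → Euc d}

theorem ContinuousElliptic.exists_le_closedBall_of_le (hell : ContinuousElliptic a b)
    (x₀ : Euc d) {r R M c₀ : ℝ} (hr : 0 < r) (hR : 0 < R) (hM : 0 < M) (hc₀ : 0 < c₀) :
    ∃ c > 0, ∃ η > 0, ∀ z : Euc d → ℝ, ContDiff ℝ 2 z → (∀ x, 0 ≤ z x) →
      (∀ x ∈ closedBall x₀ (2 * R), Lop a b z x - M * z x ≤ η) →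
      (∀ x ∈ closedBall x₀ r, c₀ ≤ z x) → ∀ x ∈ closedBall x₀ R, c ≤ z x := by
  obtain ⟨q, hq, hq01, hqpos, hLq⟩ :=
    hell.exists_barrier x₀ hr (show 0 < 2 * R by positivity) hM.le
  obtain ⟨m, hm, hmq⟩ := (isCompact_closedBall x₀ R).exists_forall_le'
    hq.continuous.continuousOn fun x hx => (hqpos x).mpr (hx.trans_lt (by linarith))
  have hκ : 0 < c₀ * m / 2 := by positivity
  refine ⟨c₀ * m / 2, hκ, M * (c₀ * m / 2), by positivity, fun z hz hz0 hLz hzr x hx => ?_⟩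
  have hcq : ContDiff ℝ 2 fun x => c₀ * q x := contDiff_const.mul hq
  have hmax : ∀ y ∈ closedBall x₀ (2 * R), c₀ * q y - z y ≤ c₀ * m / 2 := by
    refine le_of_Lop_pos (b := b) (fun y => (hell.posDef y).posSemidef)
      (isCompact_closedBall x₀ (2 * R)) (hcq.sub hz) fun y hy hκy => ?_
    have hqy : 0 < q y := pos_of_mul_pos_right (by linarith [hz0 y]) hc₀.le
    have hry : r ≤ dist y x₀ := by
      by_contra! hlt
      linarith [hzr y hlt.le, mul_le_of_le_one_right hc₀.le (hq01 y).2]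
    refine ⟨closedBall_mem_nhds_of_mem ((hqpos y).mp hqy), ?_⟩
    rw [Lop_sub hcq.contDiffAt hz.contDiffAt, Lop_const_mul _ hq.contDiffAt]
    have h1 := mul_le_mul_of_nonneg_left (hLq y hry) hc₀.le
    have h2 := mul_lt_mul_of_pos_left hκy hM
    linarith [hLz y hy]
  have hxmax := hmax x (closedBall_subset_closedBall (by linarith) hx)
  have hxq := mul_le_mul_of_nonneg_left (hmq x hx) hc₀.le
  linarith

lemma ContinuousElliptic.exists_le_closedBall_of_Lop_le_neg (hell : ContinuousElliptic a b)
    (x₀ : Euc d) {r M σ : ℝ} (hr : 0 < r) (hM : 0 ≤ M) (hσ : 0 < σ) :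
    ∃ c > 0, ∀ z : Euc d → ℝ, ContDiff ℝ 2 z → (∀ x, 0 ≤ z x) →
      (∀ x ∈ closedBall x₀ r, Lop a b z x - M * z x ≤ -σ) →
        ∀ x ∈ closedBall x₀ (r / 2), c ≤ z x := by
  have hp := contDiff_paraboloid x₀ r
  obtain ⟨m, hm, hmp⟩ := (isCompact_closedBall x₀ (r / 2)).exists_forall_le'
    hp.continuous.continuousOn
    fun x hx => (paraboloid_pos_iff hr).mpr (hx.trans_lt (half_lt_self hr))
  obtain ⟨ε, hε, hε0⟩ := ((eventually_forall_mul_lt (isCompact_closedBall x₀ r)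
    (f := fun _ => σ) (g := fun x => M * paraboloid x₀ r x - Lop a b (paraboloid x₀ r) x)
    continuousOn_const ((continuous_const.mul hp.continuous).sub
      (hell.continuous_Lop hp)).continuousOn fun _ _ => hσ).and self_mem_nhdsWithin).exists
  refine ⟨ε * m, mul_pos hε0 hm, fun z hz hz0 hLz x hx => ?_⟩
  have hεp : ContDiff ℝ 2 fun x => ε * paraboloid x₀ r x := contDiff_const.mul hp
  have hmax : ∀ y ∈ closedBall x₀ r, ε * paraboloid x₀ r y - z y ≤ 0 := by
    refine le_of_Lop_pos (b := b) (fun y => (hell.posDef y).posSemidef)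
      (isCompact_closedBall x₀ r) (hεp.sub hz) fun y hy hpos => ?_
    have hpy : 0 < paraboloid x₀ r y := pos_of_mul_pos_right (by linarith [hz0 y]) hε0.le
    refine ⟨closedBall_mem_nhds_of_mem ((paraboloid_pos_iff hr).mp hpy), ?_⟩
    rw [Lop_sub hεp.contDiffAt hz.contDiffAt, Lop_const_mul _ hp.contDiffAt]
    linarith [hLz y hy, hε y hy, mul_nonneg hM hpos.le]
  have hxmax := hmax x (closedBall_subset_closedBall (half_le_self hr.le) hx)
  linarith [mul_le_mul_of_nonneg_left (hmp x hx) hε0.le]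

end Propagation

section VanishingFamily

variable {d : ℕ} {a : Euc d → Matrix (Fin d) (Fin d) ℝ} {b : Euc d → Euc d} {Q : Euc d → ℝ}
  {ι : Type*} {l : Filter ι} {z : ι → Euc d → ℝ}

/-- Nonnegative functions satisfying `𝓛z - Mz ≤ -Q` up to an error vanishing along `l`, whose
infimum over some fixed compact set tends to `0` along `l`. It expresses, without passing to a limit
function, that the limit attains the value `0`. -/
structure VanishingFamily (a : Euc d → Matrix (Fin d) (Fin d) ℝ) (b : Euc d → Euc d)
    (Q : Euc d → ℝ) (l : Filter ι) (z : ι → Euc d → ℝ) : Prop where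
  contDiff : ∀ᶠ i in l, ContDiff ℝ 2 (z i)
  nonneg : ∀ᶠ i in l, ∀ x, 0 ≤ z i x
  Lop_le : ∀ K, IsCompact K → ∃ M > 0, ∀ η > 0, ∀ᶠ i in l, ∀ x ∈ K,
    Lop a b (z i) x - M * z i x ≤ η - Q x
  exists_lt : ∃ K, IsCompact K ∧ ∀ c > 0, ∀ᶠ i in l, ∃ x ∈ K, z i x < c

namespace VanishingFamily

lemma not_eventually_le_closedBall [l.NeBot] (hz : VanishingFamily a b Q l z)
    (hell : ContinuousElliptic a b) (hQ : ∀ x, 0 ≤ Q x) (x₀ : Euc d) {r c₀ : ℝ} (hr : 0 < r)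
    (hc₀ : 0 < c₀) : ¬∀ᶠ i in l, ∀ x ∈ closedBall x₀ r, c₀ ≤ z i x := by
  intro hball
  obtain ⟨K, hK, hlt⟩ := hz.exists_lt
  obtain ⟨R, hR, hKR⟩ := hK.isBounded.subset_closedBall_lt 0 x₀
  obtain ⟨M, hM, hL⟩ := hz.Lop_le _ (isCompact_closedBall x₀ (2 * R))
  obtain ⟨c, hc, η, hη, hprop⟩ := hell.exists_le_closedBall_of_le x₀ hr hR hM hc₀
  obtain ⟨i, hreg, hnn, hLi, hbi, x, hx, hxc⟩ :=
    (hz.contDiff.and (hz.nonneg.and ((hL η hη).and (hball.and (hlt c hc))))).exists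
  have hcx := hprop (z i) hreg hnn (fun y hy => (hLi y hy).trans (sub_le_self _ (hQ y))) hbi x
    (hKR hx)
  exact hxc.not_ge hcx

theorem eq_zero [l.NeBot] (hz : VanishingFamily a b Q l z) (hell : ContinuousElliptic a b)
    (hQc : Continuous Q) (hQ : ∀ x, 0 ≤ Q x) (x₀ : Euc d) : Q x₀ = 0 := by
  refine ((hQ x₀).eq_or_lt.resolve_right fun hpos => ?_).symm
  obtain ⟨r, hr, hQr⟩ := nhds_basis_closedBall.eventually_iff.mp
    (hQc.continuousAt.eventually (lt_mem_nhds (half_lt_self hpos)))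
  obtain ⟨M, hM, hL⟩ := hz.Lop_le _ (isCompact_closedBall x₀ r)
  obtain ⟨c, hc, hloc⟩ :=
    hell.exists_le_closedBall_of_Lop_le_neg x₀ hr hM.le (show 0 < Q x₀ / 4 by positivity)
  refine hz.not_eventually_le_closedBall hell hQ x₀ (half_pos hr) hc ?_
  filter_upwards [hz.contDiff, hz.nonneg, hL (Q x₀ / 4) (by positivity)] with i hreg hnn hLi
  exact hloc (z i) hreg hnn fun x hx => (hLi x hx).trans (by linarith [hQr hx])

end VanishingFamily

theorem ContinuousElliptic.pos_of_nonneg (hell : ContinuousElliptic a b) {W u : Euc d → ℝ}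
    (hW : Continuous W) (hu : ContDiff ℝ 2 u) (hu0 : ∀ x, 0 ≤ u x)
    (hLu : ∀ x, Lop a b u x + W x * u x ≤ 0) (hne : ∃ x, u x ≠ 0) (x : Euc d) : 0 < u x := by
  refine (hu0 x).lt_of_ne fun hx => ?_
  have hfam : VanishingFamily a b (fun _ => 0) (pure ()) fun _ => u := by
    refine ⟨by simpa, by simpa, fun K hK => ?_,
      {x}, isCompact_singleton, fun c hc => by simpa [← hx]⟩
    obtain ⟨B, hB⟩ := hK.exists_bound_of_continuousOn hW.continuousOn
    refine ⟨max B 1, by positivity, fun η hη => eventually_pure.mpr fun y hy => ?_⟩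
    have hWB : -W y ≤ max B 1 := ((neg_le_abs _).trans (hB y hy)).trans (le_max_left _ _)
    linarith [hLu y, mul_le_mul_of_nonneg_right hWB (hu0 y)]
  obtain ⟨y, hy⟩ := hne
  have hy0 : 0 < u y := (hu0 y).lt_of_ne' hy
  obtain ⟨r, hr, hur⟩ := nhds_basis_closedBall.eventually_iff.mp
    (hu.continuous.continuousAt.eventually (lt_mem_nhds (half_lt_self hy0)))
  exact hfam.not_eventually_le_closedBall hell (fun _ => le_rfl) y hr (half_pos hy0)
    (eventually_pure.mpr fun x hx => (hur hx).le)

end VanishingFamily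

section Supersolutions

variable {d : ℕ} {a : Euc d → Matrix (Fin d) (Fin d) ℝ} {b : Euc d → Euc d}
  {W W' u s s₁ s₂ : Euc d → ℝ} {D D' : Set (Euc d)} {x : Euc d}

/-- A positive `C²` function `s` with `𝓛s + Ws ≤ 0` on `D`. Strict and approximate supersolutions
are those of `W + γ` and `W - η` for constants `γ, η > 0`. -/
structure IsSupersolutionOn (a : Euc d → Matrix (Fin d) (Fin d) ℝ) (b : Euc d → Euc d)
    (W : Euc d → ℝ) (D : Set (Euc d)) (s : Euc d → ℝ) : Prop where
  contDiffOn : ContDiffOn ℝ 2 s D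
  pos : ∀ x ∈ D, 0 < s x
  le : ∀ x ∈ D, Lop a b s x + W x * s x ≤ 0

lemma isOpen_lt_norm (R : ℝ) : IsOpen {x : Euc d | R < ‖x‖} :=
  isOpen_lt continuous_const continuous_norm

lemma isClosed_le_norm (R : ℝ) : IsClosed {x : Euc d | R ≤ ‖x‖} :=
  isClosed_le continuous_const continuous_norm

lemma exists_radius_of_eventually_cocompact {p : Euc d → Prop}
    (h : ∀ᶠ x in cocompact (Euc d), p x) (R : ℝ) : ∃ R' > R, ∀ x, R' < ‖x‖ → p x := by
  obtain ⟨K, hK, hKp⟩ := mem_cocompact.mp h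
  obtain ⟨R', hR', hKR'⟩ := hK.isBounded.subset_closedBall_lt R 0
  exact ⟨R', hR', fun x hx => hKp fun hxK => hx.not_ge (by simpa using hKR' hxK)⟩

lemma Lop_mul_div_rpow_le (ha : (a x).PosSemidef) (h₁ : ContDiffAt ℝ 2 s₁ x)
    (h₂ : ContDiffAt ℝ 2 s₂ x) (hpos₁ : 0 < s₁ x) (hpos₂ : 0 < s₂ x) {α : ℝ} (hα₀ : 0 ≤ α)
    (hα₁ : α ≤ 1) :
    Lop a b (fun y => s₂ y * (s₁ y / s₂ y) ^ α) x ≤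
      (s₁ x / s₂ x) ^ α * (α * (s₂ x / s₁ x * Lop a b s₁ x) + (1 - α) * Lop a b s₂ x) := by
  have ht : 0 < s₁ x / s₂ x := div_pos hpos₁ hpos₂
  have hfirst : ∀ᶠ t in nhds (s₁ x / s₂ x),
      HasDerivAt (fun t : ℝ => t ^ α) (α * t ^ (α - 1)) t := by
    filter_upwards [lt_mem_nhds ht] with t ht using Real.hasDerivAt_rpow_const (Or.inl ht.ne')
  have hsecond : HasDerivAt (fun t : ℝ => α * t ^ (α - 1))
      (α * ((α - 1) * (s₁ x / s₂ x) ^ (α - 1 - 1))) (s₁ x / s₂ x) :=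
    (Real.hasDerivAt_rpow_const (Or.inl ht.ne')).const_mul α
  rw [Lop_perspective h₂ h₁ hpos₂.ne' (Real.contDiffAt_rpow_const_of_ne ht.ne') hfirst hsecond,
    Real.rpow_sub_one ht.ne' α]
  have hΓ : s₂ x * (α * ((α - 1) * (s₁ x / s₂ x) ^ (α - 1 - 1))) *
      carreDuChamp a (fun y => s₁ y / s₂ y) (fun y => s₁ y / s₂ y) x ≤ 0 := by
    refine mul_nonpos_of_nonpos_of_nonneg (mul_nonpos_of_nonneg_of_nonpos hpos₂.le ?_)
      (carreDuChamp_self_nonneg ha)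
    exact mul_nonpos_of_nonneg_of_nonpos hα₀
      (mul_nonpos_of_nonpos_of_nonneg (by linarith) (Real.rpow_nonneg ht.le _))
  refine (add_le_of_nonpos_right hΓ).trans_eq ?_
  field_simp

namespace IsSupersolutionOn

lemma contDiffAt (hs : IsSupersolutionOn a b W D s) (hD : IsOpen D) (hx : x ∈ D) :
    ContDiffAt ℝ 2 s x :=
  hs.contDiffOn.contDiffAt (hD.mem_nhds hx)

lemma contDiff (hs : IsSupersolutionOn a b W univ s) : ContDiff ℝ 2 s :=
  contDiffOn_univ.mp hs.contDiffOn

lemma mono_set (hs : IsSupersolutionOn a b W D s) (hD : D' ⊆ D) : IsSupersolutionOn a b W D' s :=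
  ⟨hs.contDiffOn.mono hD, fun x hx => hs.pos x (hD hx), fun x hx => hs.le x (hD hx)⟩

lemma mono_potential (hs : IsSupersolutionOn a b W D s) (hW : ∀ x ∈ D, W' x ≤ W x) :
    IsSupersolutionOn a b W' D s :=
  ⟨hs.contDiffOn, hs.pos, fun x hx =>
    (add_le_add_right (mul_le_mul_of_nonneg_right (hW x hx) (hs.pos x hx).le) _).trans (hs.le x hx)⟩

lemma congr_coeff {a' : Euc d → Matrix (Fin d) (Fin d) ℝ} {b' : Euc d → Euc d}
    (hs : IsSupersolutionOn a b W D s) (h : ∀ x ∈ D, a x = a' x ∧ b x = b' x) :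
    IsSupersolutionOn a' b' W D s :=
  ⟨hs.contDiffOn, hs.pos, fun x hx => by
    rw [← Lop_congr_coeff (h x hx).1 (h x hx).2]; exact hs.le x hx⟩

lemma const_mul (hs : IsSupersolutionOn a b W D s) (hD : IsOpen D) {c : ℝ} (hc : 0 < c) :
    IsSupersolutionOn a b W D fun x => c * s x :=
  ⟨contDiffOn_const.mul hs.contDiffOn, fun x hx => mul_pos hc (hs.pos x hx), fun x hx => by
    rw [Lop_const_mul c (hs.contDiffAt hD hx)]
    linarith [mul_nonpos_of_nonneg_of_nonpos hc.le (hs.le x hx)]⟩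

lemma geom_mean (h₁ : IsSupersolutionOn a b W D s₁) (h₂ : IsSupersolutionOn a b W' D s₂)
    (hD : IsOpen D) (ha : ∀ x, (a x).PosSemidef) {α : ℝ} (hα₀ : 0 ≤ α) (hα₁ : α ≤ 1) :
    IsSupersolutionOn a b (fun x => α * W x + (1 - α) * W' x) D
      fun x => s₂ x * (s₁ x / s₂ x) ^ α := by
  have hratio (x : Euc d) (hx : x ∈ D) : 0 < s₁ x / s₂ x := div_pos (h₁.pos x hx) (h₂.pos x hx)
  have hu : ContDiffOn ℝ 2 (fun x => s₁ x / s₂ x) D :=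
    h₁.contDiffOn.div h₂.contDiffOn fun x hx => (h₂.pos x hx).ne'
  have hpow : ContDiffOn ℝ 2 (fun x => (s₁ x / s₂ x) ^ α) D :=
    hu.rpow_const_of_ne fun x hx => (hratio x hx).ne'
  refine ⟨h₂.contDiffOn.mul hpow, fun x hx => mul_pos (h₂.pos x hx)
    (Real.rpow_pos_of_pos (hratio x hx) _), fun x hx => ?_⟩
  have hle := Lop_mul_div_rpow_le (b := b) (ha x) (h₁.contDiffAt hD hx) (h₂.contDiffAt hD hx)
    (h₁.pos x hx) (h₂.pos x hx) hα₀ hα₁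
  have hL₁ : s₂ x / s₁ x * Lop a b s₁ x ≤ -(W x * s₂ x) := by
    rw [div_mul_eq_mul_div, div_le_iff₀ (h₁.pos x hx)]
    nlinarith [mul_nonpos_of_nonneg_of_nonpos (h₂.pos x hx).le (h₁.le x hx)]
  have hmean : (s₁ x / s₂ x) ^ α * (α * (s₂ x / s₁ x * Lop a b s₁ x) + (1 - α) * Lop a b s₂ x) ≤
      (s₁ x / s₂ x) ^ α * (α * -(W x * s₂ x) + (1 - α) * -(W' x * s₂ x)) := by
    have hL₂ : Lop a b s₂ x ≤ -(W' x * s₂ x) := by linarith [h₂.le x hx]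
    refine mul_le_mul_of_nonneg_left (add_le_add (mul_le_mul_of_nonneg_left hL₁ hα₀)
      (mul_le_mul_of_nonneg_left hL₂ (by linarith))) (Real.rpow_nonneg (hratio x hx).le α)
  linarith

end IsSupersolutionOn

lemma mul_div_rpow_le_add {p q α : ℝ} (hp : 0 ≤ p) (hq : 0 < q) (hα₀ : 0 ≤ α) (hα₁ : α ≤ 1) :
    q * (p / q) ^ α ≤ α * p + (1 - α) * q := by
  have h := Real.geom_mean_le_arith_mean2_weighted hα₀ (sub_nonneg.mpr hα₁)
    (div_nonneg hp hq.le) zero_le_one (by ring)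
  rw [Real.one_rpow, mul_one, mul_one] at h
  calc q * (p / q) ^ α ≤ q * (α * (p / q) + (1 - α)) := by gcongr
    _ = α * p + (1 - α) * q := by field_simp

lemma le_mul_div_rpow {t p q α : ℝ} (hp : 0 < p) (hq : 0 < q) (htp : t ≤ p) (htq : t ≤ q)
    (hα₀ : 0 ≤ α) (hα₁ : α ≤ 1) : t ≤ q * (p / q) ^ α := by
  rcases le_total p q with h | h
  · have hpq : p / q ≤ 1 := (div_le_one hq).mpr h
    calc t ≤ q * (p / q) := htp.trans_eq (mul_div_cancel₀ _ hq.ne').symm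
      _ ≤ q * (p / q) ^ α := by
        gcongr
        simpa using Real.rpow_le_rpow_of_exponent_ge (div_pos hp hq) hpq hα₁
  · exact htq.trans (le_mul_of_one_le_right hq.le
      (Real.one_le_rpow ((one_le_div hq).mpr h) hα₀))

end Supersolutions

section ExteriorComparison

variable {d : ℕ} {a : Euc d → Matrix (Fin d) (Fin d) ℝ} {b : Euc d → Euc d}
  {W Ψ φ s w : Euc d → ℝ}

/-- `Ψ` is dominated at infinity, up to a positive constant, by every positive strict
supersolution of `𝓛 + W` near infinity. It weakens the minimal growth of a ground state so as to be
stable under perturbations of `W` vanishing at infinity. -/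
def HasMinimalGrowth (a : Euc d → Matrix (Fin d) (Fin d) ℝ) (b : Euc d → Euc d)
    (W Ψ : Euc d → ℝ) : Prop :=
  ∀ γ > 0, ∀ R v, IsSupersolutionOn a b (fun x => W x + γ) {x | R < ‖x‖} v →
    ∃ κ > 0, ∀ᶠ x in cocompact (Euc d), κ * Ψ x ≤ v x

/-- The comparison principle between `Ψ` and the positive strict supersolutions of `𝓛 + W`, on the
complements of the balls centred at the origin. -/
def ExteriorComparison (a : Euc d → Matrix (Fin d) (Fin d) ℝ) (b : Euc d → Euc d)
    (W Ψ : Euc d → ℝ) : Prop :=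
  ∀ R₁ R, R₁ < R → ∀ γ > 0, ∀ s, IsSupersolutionOn a b (fun x => W x + γ) {x | R₁ < ‖x‖} s →
    (∀ x, ‖x‖ = R → Ψ x ≤ s x) → ∀ x, R ≤ ‖x‖ → Ψ x ≤ s x

lemma lt_norm_subset {R₁ R : ℝ} (h : R₁ ≤ R) : {x : Euc d | R < ‖x‖} ⊆ {x | R₁ < ‖x‖} :=
  fun _ hx => h.trans_lt hx

lemma IsGroundState.hasMinimalGrowth {a₁ : Euc d → Matrix (Fin d) (Fin d) ℝ} {b₁ : Euc d → Euc d}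
    {W₁ Ψ₁ : Euc d → ℝ} (hgs : IsGroundState a₁ b₁ W₁ Ψ₁ univ)
    (hcoef : ∀ᶠ x in cocompact (Euc d), a₁ x = a x ∧ b₁ x = b x)
    (hW : Tendsto (fun x => W₁ x - W x) (cocompact (Euc d)) (nhds 0)) {C : ℝ} (hC : 0 < C)
    (hbound : ∀ x, Ψ x ≤ C * Ψ₁ x) : HasMinimalGrowth a b W Ψ := by
  intro γ hγ R v hv
  obtain ⟨R', hR', hfar⟩ := exists_radius_of_eventually_cocompact
    (hcoef.and (hW.eventually (gt_mem_nhds hγ))) R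
  have hset : univ \ closedBall (0 : Euc d) R' = {x | R' < ‖x‖} := by ext; simp
  have hv₁ : IsSupersolutionOn a₁ b₁ W₁ (univ \ closedBall 0 R') v := by
    rw [hset]
    refine ((hv.mono_set (lt_norm_subset hR'.le)).mono_potential fun x hx => ?_).congr_coeff
      fun x hx => ⟨(hfar x hx).1.1.symm, (hfar x hx).1.2.symm⟩
    linarith [(hfar x hx).2]
  obtain ⟨K', hK', -, -, κ, hκ, hle⟩ := hgs.2.2.2 _ (isCompact_closedBall 0 R') (subset_univ _) v
    hv₁.contDiffOn hv₁.pos hv₁.le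
  refine ⟨κ / C, div_pos hκ hC, ?_⟩
  filter_upwards [hK'.compl_mem_cocompact] with x hx
  calc κ / C * Ψ x ≤ κ / C * (C * Ψ₁ x) := mul_le_mul_of_nonneg_left (hbound x) (by positivity)
    _ = κ * Ψ₁ x := by field_simp
    _ ≤ v x := hle x ⟨mem_univ x, hx⟩

lemma HasMinimalGrowth.exists_mul_le (hmin : HasMinimalGrowth a b W Ψ) (hΨ : Continuous Ψ)
    {R₁ γ : ℝ} {K : Set (Euc d)} (hγ : 0 < γ)
    (hs : IsSupersolutionOn a b (fun x => W x + γ) {x | R₁ < ‖x‖} s)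
    (hK : IsClosed K) (hsK : ContinuousOn s K) (hpos : ∀ x ∈ K, 0 < s x) :
    ∃ ε > 0, ∀ x ∈ K, ε * Ψ x ≤ s x := by
  obtain ⟨κ, hκ, hle⟩ := hmin γ hγ R₁ s hs
  exact exists_forall_mul_le_of_eventually_cocompact hK hsK hΨ.continuousOn hpos hκ
    (hle.mono fun x hx _ => hx)

lemma Lop_le_of_eventuallyLE_of_eq {u : Euc d → ℝ} {x : Euc d} (ha : (a x).PosSemidef)
    (hu : ContDiffAt ℝ 2 u x) (hs : ContDiffAt ℝ 2 s x) (hle : u ≤ᶠ[nhds x] s) (heq : u x = s x) :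
    Lop a b u x ≤ Lop a b s x := by
  have hmax : IsLocalMax (fun y => u y - s y) x :=
    hle.mono fun y hy => (sub_nonpos.mpr hy).trans_eq (sub_eq_zero.mpr heq).symm
  have hL := Lop_nonpos_of_isLocalMax (b := b) ha hmax (hu.sub hs)
  rw [Lop_sub hu hs] at hL
  exact sub_nonpos.mp hL

lemma Lop_mul_cube_sub_cube_div {F : ℝ} {x : Euc d} (hs : ContDiffAt ℝ 2 s x) (hs0 : s x ≠ 0)
    (hΨ : ContDiffAt ℝ 2 Ψ x) :
    Lop a b (fun y => s y * (F ^ 3 - max (Ψ y / s y) 0 ^ 3)) x =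
      (F ^ 3 + 2 * max (Ψ x / s x) 0 ^ 3) * Lop a b s x
        - 3 * max (Ψ x / s x) 0 ^ 2 * Lop a b Ψ x
        - 6 * (s x * max (Ψ x / s x) 0 *
          carreDuChamp a (fun y => Ψ y / s y) (fun y => Ψ y / s y) x) := by
  set t := Ψ x / s x
  have hg (t : ℝ) : HasDerivAt (fun t => F ^ 3 - max t 0 ^ 3) (-(3 * max t 0 ^ 2)) t :=
    ((hasDerivAt_max_zero_pow 1 t).const_sub (F ^ 3)).congr_deriv (by norm_num)
  have hg' : HasDerivAt (fun t : ℝ => -(3 * max t 0 ^ 2)) (-(3 * (2 * max t 0))) t :=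
    ((hasDerivAt_max_zero_pow 0 t).const_mul 3).neg.congr_deriv (by norm_num)
  rw [Lop_perspective hs hΨ hs0 (contDiffAt_const.sub (contDiff_two_max_zero_pow 0).contDiffAt)
    (Eventually.of_forall hg) hg']
  rcases max_cases t 0 with h | h
  · rw [h.1]; ring
  · rw [h.1]; ring

/-- The image under `t ↦ F ^ 3 - t⁺ ^ 3` of the ratio of `Ψ` to `s` has the right sign because
this function is nonincreasing and concave; the cube makes it `C²`. -/
lemma IsSupersolutionOn.mul_cube_sub_cube_div {D : Set (Euc d)} {γ F : ℝ}
    (hs : IsSupersolutionOn a b (fun x => W x + γ) D s) (hD : IsOpen D)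
    (ha : ∀ x, (a x).PosSemidef) (hγ : 0 ≤ γ) (hF : 0 < F) (hΨ : ContDiff ℝ 2 Ψ)
    (hsub : ∀ x, 0 ≤ Lop a b Ψ x + W x * Ψ x) (hlt : ∀ x ∈ D, Ψ x < F * s x) :
    IsSupersolutionOn a b (fun x => W x + γ) D
      fun x => s x * (F ^ 3 - max (Ψ x / s x) 0 ^ 3) := by
  refine ⟨hs.contDiffOn.mul (contDiffOn_const.sub ((contDiff_two_max_zero_pow 0).comp_contDiffOn
    (hΨ.contDiffOn.div hs.contDiffOn fun x hx => (hs.pos x hx).ne'))), fun x hx => ?_,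
    fun x hx => ?_⟩
  · have hmax : max (Ψ x / s x) 0 < F := max_lt ((div_lt_iff₀ (hs.pos x hx)).mpr (hlt x hx)) hF
    exact mul_pos (hs.pos x hx)
      (sub_pos.mpr (pow_lt_pow_left₀ hmax (le_max_right _ _) (by norm_num)))
  have hsx := hs.pos x hx
  rw [Lop_mul_cube_sub_cube_div (hs.contDiffAt hD hx) hsx.ne' hΨ.contDiffAt]
  set p := max (Ψ x / s x) 0
  have hp : 0 ≤ p := le_max_right _ _
  have hΨp : Ψ x * p ^ 2 = s x * p ^ 3 := by
    rcases max_cases (Ψ x / s x) 0 with h | h <;> simp only [p, h.1]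
    · field_simp
    · ring
  have hΓ := mul_nonneg (mul_nonneg hsx.le hp)
    (carreDuChamp_self_nonneg (u := fun y => Ψ y / s y) (ha x))
  have hLΨ := mul_nonneg (sq_nonneg p) (hsub x)
  have hLs := mul_nonpos_of_nonneg_of_nonpos (by positivity : 0 ≤ F ^ 3 + 2 * p ^ 3) (hs.le x hx)
  have hγp := mul_nonneg (mul_nonneg hγ hsx.le) (pow_nonneg hp 3)
  linear_combination hLs + 3 * hLΨ + 6 * hΓ + 3 * hγp + 3 * W x * hΨp

lemma exists_lt_forall_le_of_mul_add_cube_le {κ F : ℝ} (hκ : 0 < κ) (hF : 0 < F) :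
    ∃ G < F, ∀ t, κ * t + max t 0 ^ 3 ≤ F ^ 3 → t ≤ G := by
  have hcont : Continuous fun t : ℝ => κ * t + max t 0 ^ 3 := by fun_prop
  have hF3 : F ^ 3 < κ * F + max F 0 ^ 3 := by
    rw [max_eq_left hF.le]; linarith [mul_pos hκ hF]
  obtain ⟨G, hG, hGF⟩ := ((hcont.continuousAt.eventually (lt_mem_nhds hF3)).filter_mono
    nhdsWithin_le_nhds |>.and (self_mem_nhdsWithin (s := Iio F))).exists
  refine ⟨G, hGF, fun t ht => le_of_not_gt fun hGt => (hG.trans_le ?_).not_ge ht⟩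
  gcongr

variable {R₁ R γ F : ℝ}

lemma lt_mul_of_forall_le_mul (ha : ∀ x, (a x).PosSemidef)
    (hΨ : ContDiff ℝ 2 Ψ) (hsub : ∀ x, 0 ≤ Lop a b Ψ x + W x * Ψ x) (hR : R₁ < R) (hγ : 0 < γ)
    (hs : IsSupersolutionOn a b (fun x => W x + γ) {x | R₁ < ‖x‖} s) (hF : 1 < F)
    (hsphere : ∀ x, ‖x‖ = R → Ψ x ≤ s x) (hle : ∀ x, R ≤ ‖x‖ → Ψ x ≤ F * s x) {x : Euc d}
    (hx : R ≤ ‖x‖) : Ψ x < F * s x := by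
  have hxR₁ : x ∈ {x | R₁ < ‖x‖} := hR.trans_le hx
  have hsx := hs.pos x hxR₁
  refine (hle x hx).lt_of_ne fun heq => ?_
  rcases hx.eq_or_lt with hxR | hxR
  · exact (lt_mul_of_one_lt_left hsx hF).not_ge (heq ▸ hsphere x hxR.symm)
  have hsC := hs.contDiffAt (isOpen_lt_norm R₁) hxR₁
  have hcontact := Lop_le_of_eventuallyLE_of_eq (b := b) (ha x) hΨ.contDiffAt
    (contDiffAt_const.mul hsC)
    (mem_of_superset ((isOpen_lt_norm R).mem_nhds hxR) fun y hy => hle y (le_of_lt hy)) heq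
  rw [Lop_const_mul F hsC] at hcontact
  have hΨx := hsub x
  rw [heq] at hΨx
  have hF0 : 0 < F := by linarith
  linarith [mul_nonpos_of_nonneg_of_nonpos hF0.le (hs.le x hxR₁), mul_pos hF0 (mul_pos hγ hsx)]

namespace HasMinimalGrowth

lemma exists_le_sub_mul (hmin : HasMinimalGrowth a b W Ψ) (ha : ∀ x, (a x).PosSemidef)
    (hΨ : ContDiff ℝ 2 Ψ) (hsub : ∀ x, 0 ≤ Lop a b Ψ x + W x * Ψ x) (hR : R₁ < R) (hγ : 0 < γ)
    (hs : IsSupersolutionOn a b (fun x => W x + γ) {x | R₁ < ‖x‖} s) (hF : 0 < F)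
    (hlt : ∀ x, R ≤ ‖x‖ → Ψ x < F * s x) :
    ∃ ε > 0, ∀ x, R ≤ ‖x‖ → Ψ x ≤ (F - ε) * s x := by
  have hE : {x : Euc d | R ≤ ‖x‖} ⊆ {x | R₁ < ‖x‖} := fun x hx => hR.trans_le hx
  obtain ⟨κ, hκ, hle⟩ := hmin γ hγ R _ ((hs.mono_set (lt_norm_subset hR.le)).mul_cube_sub_cube_div
    (isOpen_lt_norm R) ha hγ.le hF hΨ hsub fun x hx => hlt x (le_of_lt hx))
  obtain ⟨G, hGF, hG⟩ := exists_lt_forall_le_of_mul_add_cube_le hκ hF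
  have hsE : ContinuousOn s {x | R ≤ ‖x‖} := hs.contDiffOn.continuousOn.mono hE
  obtain ⟨ε, hε, hεle⟩ := exists_forall_mul_le_of_eventually_cocompact (isClosed_le_norm R)
    (f := fun x => F * s x - Ψ x) ((continuousOn_const.mul hsE).sub hΨ.continuous.continuousOn) hsE
    (fun x hx => sub_pos.mpr (hlt x hx)) (sub_pos.mpr hGF) (by
      filter_upwards [hle] with x hx hxR
      have hsx := hs.pos x (hE hxR)
      have hratio : Ψ x / s x ≤ G := hG _ (by
        rw [← sub_nonneg, ← mul_nonneg_iff_of_pos_left hsx]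
        have : s x * (κ * (Ψ x / s x)) = κ * Ψ x := by field_simp
        linarith)
      linarith [(div_le_iff₀ hsx).mp hratio])
  exact ⟨ε, hε, fun x hx => by linarith [hεle x hx]⟩

theorem exteriorComparison (hmin : HasMinimalGrowth a b W Ψ) (ha : ∀ x, (a x).PosSemidef)
    (hΨ : ContDiff ℝ 2 Ψ) (hsub : ∀ x, 0 ≤ Lop a b Ψ x + W x * Ψ x) :
    ExteriorComparison a b W Ψ := by
  intro R₁ R hR γ hγ s hs hsphere
  have hpos (x : Euc d) (hx : R ≤ ‖x‖) : 0 < s x := hs.pos x (hR.trans_le hx)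
  set S : Set ℝ := {F | 1 ≤ F ∧ ∀ x, R ≤ ‖x‖ → Ψ x ≤ F * s x} with hS
  have hmono {F F' : ℝ} (hF : ∀ x, R ≤ ‖x‖ → Ψ x ≤ F * s x) (hFF' : F ≤ F') (x : Euc d)
      (hx : R ≤ ‖x‖) : Ψ x ≤ F' * s x :=
    (hF x hx).trans (mul_le_mul_of_nonneg_right hFF' (hpos x hx).le)
  have hne : S.Nonempty := by
    obtain ⟨ε, hε, hle⟩ := hmin.exists_mul_le hΨ.continuous hγ hs (isClosed_le_norm R)
      (hs.contDiffOn.continuousOn.mono fun x hx => hR.trans_le hx) hpos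
    exact ⟨max 1 ε⁻¹, le_max_left _ _, hmono (fun x hx =>
      (le_inv_mul_iff₀ hε).mpr (hle x hx)) (le_max_right _ _)⟩
  have hclosed : IsClosed S := by
    simp only [hS, ofPred_and, ofPred_forall]
    exact isClosed_Ici.inter (isClosed_iInter fun x => isClosed_iInter fun _ =>
      isClosed_le continuous_const (continuous_id.mul continuous_const))
  have hbdd : BddBelow S := ⟨1, fun F hF => hF.1⟩
  obtain ⟨hF1, hF⟩ := hclosed.csInf_mem hne hbdd
  rcases hF1.eq_or_lt with hone | hone
  · simpa [← hone] using hF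
  have hlt (x : Euc d) (hx : R ≤ ‖x‖) :=
    lt_mul_of_forall_le_mul ha hΨ hsub hR hγ hs hone hsphere hF hx
  obtain ⟨ε, hε, hle⟩ :=
    hmin.exists_le_sub_mul ha hΨ hsub hR hγ hs (zero_lt_one.trans hone) hlt
  have hmem : max 1 (sInf S - ε) ∈ S := ⟨le_max_left _ _, hmono hle (le_max_right _ _)⟩
  exact absurd (csInf_le hbdd hmem) (max_lt hone (sub_lt_self _ hε)).not_ge

end HasMinimalGrowth

lemma ExteriorComparison.le_add (hcmp : ExteriorComparison a b W Ψ) (ha : ∀ x, (a x).PosSemidef)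
    {R₁ R δ η κ : ℝ} (hR : R₁ < R)
    (hφ : IsSupersolutionOn a b (fun x => W x + δ) {x | R₁ < ‖x‖} φ)
    (hw : IsSupersolutionOn a b (fun x => W x - η) {x | R₁ < ‖x‖} w)
    (hκ₀ : 0 ≤ κ) (hκ₁ : κ ≤ 1) (hη : (1 - κ) * η < κ * δ)
    (hΨφ : ∀ x, ‖x‖ = R → Ψ x ≤ φ x) (hΨw : ∀ x, ‖x‖ = R → Ψ x ≤ w x) {x : Euc d}
    (hx : R ≤ ‖x‖) : Ψ x ≤ w x + κ * φ x := by
  have hmem {y : Euc d} (hy : R ≤ ‖y‖) : y ∈ {y : Euc d | R₁ < ‖y‖} := hR.trans_le hy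
  have hmean := (hφ.geom_mean hw (isOpen_lt_norm R₁) ha hκ₀ hκ₁).mono_potential
    (W' := fun x => W x + (κ * δ - (1 - κ) * η)) fun y _ => by linarith
  calc Ψ x ≤ w x * (φ x / w x) ^ κ :=
        hcmp R₁ R hR _ (sub_pos.mpr hη) _ hmean (fun y hy => le_mul_div_rpow
          (hφ.pos y (hmem hy.ge)) (hw.pos y (hmem hy.ge)) (hΨφ y hy) (hΨw y hy) hκ₀ hκ₁) x hx
    _ ≤ κ * φ x + (1 - κ) * w x :=
        mul_div_rpow_le_add (hφ.pos x (hmem hx)).le (hw.pos x (hmem hx)) hκ₀ hκ₁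
    _ ≤ w x + κ * φ x := by linarith [mul_nonneg hκ₀ (hw.pos x (hmem hx)).le]

end ExteriorComparison

section Rigidity

variable {d : ℕ} {a : Euc d → Matrix (Fin d) (Fin d) ℝ} {b : Euc d → Euc d}
  {W U Ψ φ h w : Euc d → ℝ} {R₀ R δ ε : ℝ} {K : Set (Euc d)}

/-- A positive `C²` function on the whole space which is a strict supersolution of `𝓛 + W`, with
rate `δ`, outside the ball of radius `R₀`. -/
structure IsExteriorLyapunov (a : Euc d → Matrix (Fin d) (Fin d) ℝ) (b : Euc d → Euc d)
    (W : Euc d → ℝ) (R₀ δ : ℝ) (φ : Euc d → ℝ) : Prop where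
  rate_pos : 0 < δ
  contDiff : ContDiff ℝ 2 φ
  pos : ∀ x, 0 < φ x
  le : ∀ x, R₀ < ‖x‖ → Lop a b φ x + (W x + δ) * φ x ≤ 0

lemma IsExteriorLyapunov.isSupersolutionOn (hφ : IsExteriorLyapunov a b W R₀ δ φ) :
    IsSupersolutionOn a b (fun x => W x + δ) {x | R₀ < ‖x‖} φ :=
  ⟨hφ.contDiff.contDiffOn, fun x _ => hφ.pos x, hφ.le⟩

/-- A positive supersolution `w` of `𝓛 + U - ε` which dominates `Ψ` up to `ε * φ` and touches `Ψ`
in `K`. -/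
structure IsTouchingSupersolution (a : Euc d → Matrix (Fin d) (Fin d) ℝ) (b : Euc d → Euc d)
    (U Ψ φ : Euc d → ℝ) (K : Set (Euc d)) (ε : ℝ) (w : Euc d → ℝ) : Prop where
  isSupersolutionOn : IsSupersolutionOn a b (fun x => U x - ε) univ w
  le_add : ∀ x, Ψ x ≤ w x + ε * φ x
  exists_eq : ∃ x ∈ K, Ψ x = w x

lemma ExteriorComparison.exists_isTouchingSupersolution (hcmp : ExteriorComparison a b W Ψ)
    (ha : ∀ x, (a x).PosSemidef) (hΨ : Continuous Ψ) (hφ : IsExteriorLyapunov a b W R₀ δ φ)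
    (hΨφ : ∀ x, Ψ x ≤ φ x) (hR : R₀ < R) (hpos : ∃ x ∈ closedBall 0 R, 0 < Ψ x)
    (hh : ∀ x, 0 ≤ h x)
    (hsup : ∀ η > 0, ∃ w, IsSupersolutionOn a b (fun x => W x + h x - η) univ w) (hε : 0 < ε) :
    ∃ w, IsTouchingSupersolution a b (fun x => W x + h x) Ψ φ (closedBall 0 R) ε w := by
  set κ := min 1 ε
  have hκ : 0 < κ := lt_min one_pos hε
  have hκδ : 0 < κ * δ := mul_pos hκ hφ.rate_pos
  set η := min ε (κ * δ / 2)
  have hη : 0 < η := lt_min hε (half_pos hκδ)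
  obtain ⟨v, hv⟩ := hsup η hη
  obtain ⟨A, hA, hle, htouch⟩ := exists_le_mul_and_eq_mul (isCompact_closedBall 0 R)
    hΨ.continuousOn hv.contDiff.continuous.continuousOn (fun x _ => hv.pos x (mem_univ x)) hpos
  have hw := hv.const_mul isOpen_univ hA
  refine ⟨fun x => A * v x, hw.mono_potential fun x _ =>
    sub_le_sub_left (min_le_left _ _) _, fun x => ?_, htouch⟩
  rcases le_total ‖x‖ R with hx | hx
  · linarith [hle x (by simpa using hx), mul_pos hε (hφ.pos x), hw.pos x (mem_univ x)]
  · have hcmpx := hcmp.le_add ha hR hφ.isSupersolutionOn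
      ((hw.mono_set (subset_univ _)).mono_potential fun y _ => by linarith [hh y]) hκ.le
      (min_le_left _ _) (η := η)
      (by linarith [min_le_right ε (κ * δ / 2), mul_pos hκ hη]) (fun y _ => hΨφ y)
      (fun y hy => hle y (by simp [hy])) hx
    exact hcmpx.trans (add_le_add_right
      (mul_le_mul_of_nonneg_right (min_le_right 1 ε) (hφ.pos x).le) _)

lemma Lop_add_mul_sub_sub_le (hw : IsTouchingSupersolution a b U Ψ φ K ε w) (hΨ : ContDiff ℝ 2 Ψ)
    (hφ : ContDiff ℝ 2 φ) (hφ0 : ∀ x, 0 ≤ φ x) {M : ℝ} {x : Euc d} (hM : ε - U x ≤ M) :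
    Lop a b (fun y => w y + ε * φ y - Ψ y) x - M * (w x + ε * φ x - Ψ x) ≤
      ε * (Ψ x + U x * φ x + Lop a b φ x) - (Lop a b Ψ x + U x * Ψ x) := by
  have hwC := hw.isSupersolutionOn.contDiff.contDiffAt (x := x)
  have hφC : ContDiffAt ℝ 2 (fun y => ε * φ y) x := contDiffAt_const.mul hφ.contDiffAt
  rw [Lop_sub (hwC.add hφC) hΨ.contDiffAt, Lop_add hwC hφC, Lop_const_mul ε hφ.contDiffAt]
  have hz := mul_le_mul_of_nonneg_right hM (sub_nonneg.mpr (hw.le_add x))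
  have hεφ := mul_nonneg (mul_self_nonneg ε) (hφ0 x)
  linarith [hw.isSupersolutionOn.le x (mem_univ x)]

lemma vanishingFamily_of_isTouchingSupersolution (hell : ContinuousElliptic a b)
    (hU : Continuous U) (hΨ : ContDiff ℝ 2 Ψ) (hφ : ContDiff ℝ 2 φ) (hφ0 : ∀ x, 0 ≤ φ x)
    (hK : IsCompact K) {w : ℝ → Euc d → ℝ}
    (hw : ∀ ε > 0, IsTouchingSupersolution a b U Ψ φ K ε (w ε)) :
    VanishingFamily a b (fun x => Lop a b Ψ x + U x * Ψ x) (nhdsWithin (0 : ℝ) (Ioi 0))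
      fun ε x => w ε x + ε * φ x - Ψ x where
  contDiff := by
    filter_upwards [self_mem_nhdsWithin] with ε hε
    exact ((hw ε hε).isSupersolutionOn.contDiff.add (contDiff_const.mul hφ)).sub hΨ
  nonneg := by
    filter_upwards [self_mem_nhdsWithin] with ε hε x using sub_nonneg.mpr ((hw ε hε).le_add x)
  Lop_le K' hK' := by
    obtain ⟨B, hB⟩ := hK'.exists_bound_of_continuousOn hU.continuousOn
    refine ⟨1 + max B 0, by positivity, fun η hη => ?_⟩
    filter_upwards [Ioc_mem_nhdsGT one_pos, eventually_forall_mul_lt hK'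
      (f := fun _ => η) (g := fun x => Ψ x + U x * φ x + Lop a b φ x) continuousOn_const
      ((hΨ.continuous.add (hU.mul hφ.continuous)).add (hell.continuous_Lop hφ)).continuousOn
      fun _ _ => hη] with ε hε hεη x hx
    have hM : ε - U x ≤ 1 + max B 0 := by
      linarith [hε.2, neg_le_of_abs_le (hB x hx), le_max_left B 0]
    linarith [Lop_add_mul_sub_sub_le (hw ε hε.1) hΨ hφ hφ0 hM, hεη x hx]
  exists_lt := by
    refine ⟨K, hK, fun c hc => ?_⟩
    filter_upwards [self_mem_nhdsWithin, eventually_forall_mul_lt hK (f := fun _ => c)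
      continuousOn_const hφ.continuous.continuousOn fun _ _ => hc] with ε hε hεc
    obtain ⟨x, hx, hΨw⟩ := (hw ε hε).exists_eq
    exact ⟨x, hx, by linarith [hεc x hx]⟩

theorem nonneg_and_eq_zero_of_isTouchingSupersolution (hell : ContinuousElliptic a b)
    (hU : Continuous U) (hΨ : ContDiff ℝ 2 Ψ) (hφ : ContDiff ℝ 2 φ) (hφ0 : ∀ x, 0 ≤ φ x)
    (hK : IsCompact K) (hQ : ∀ x, 0 ≤ Lop a b Ψ x + U x * Ψ x)
    (htouch : ∀ ε > 0, ∃ w, IsTouchingSupersolution a b U Ψ φ K ε w) (x : Euc d) :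
    0 ≤ Ψ x ∧ Lop a b Ψ x + U x * Ψ x = 0 := by
  choose! w hw using htouch
  have hz := vanishingFamily_of_isTouchingSupersolution hell hU hΨ hφ hφ0 hK hw
  have hQc : Continuous fun x => Lop a b Ψ x + U x * Ψ x :=
    (hell.continuous_Lop hΨ).add (hU.mul hΨ.continuous)
  refine ⟨le_of_not_gt fun hneg => ?_, hz.eq_zero hell hQc hQ x⟩
  obtain ⟨r, hr, hΨr⟩ := nhds_basis_closedBall.eventually_iff.mp
    (hΨ.continuous.continuousAt.eventually (gt_mem_nhds (show Ψ x < Ψ x / 2 by linarith)))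
  refine hz.not_eventually_le_closedBall hell hQ x hr (show 0 < -(Ψ x / 2) by linarith) ?_
  filter_upwards [self_mem_nhdsWithin] with ε hε y hy
  linarith [hΨr hy, (hw ε hε).isSupersolutionOn.pos y (mem_univ y),
    mul_nonneg (le_of_lt hε) (hφ0 y)]

theorem ExteriorComparison.nonneg_and_Lop_add_mul_eq_zero (hcmp : ExteriorComparison a b W Ψ)
    (hell : ContinuousElliptic a b) (hW : Continuous W) (hΨ : ContDiff ℝ 2 Ψ)
    (hpos : ∃ x, 0 < Ψ x) (hφ : IsExteriorLyapunov a b W R₀ δ φ) (hΨφ : ∀ x, Ψ x ≤ φ x)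
    (hh : Continuous h) (hh0 : ∀ x, 0 ≤ h x)
    (hsup : ∀ η > 0, ∃ w, IsSupersolutionOn a b (fun x => W x + h x - η) univ w)
    (hQ : ∀ x, 0 ≤ Lop a b Ψ x + (W x + h x) * Ψ x) (x : Euc d) :
    0 ≤ Ψ x ∧ Lop a b Ψ x + (W x + h x) * Ψ x = 0 := by
  obtain ⟨y, hy⟩ := hpos
  have hR : R₀ < max (R₀ + 1) ‖y‖ := (lt_add_one R₀).trans_le (le_max_left _ _)
  exact nonneg_and_eq_zero_of_isTouchingSupersolution hell (hW.add hh) hΨ hφ.contDiff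
    (fun x => (hφ.pos x).le) (isCompact_closedBall 0 _) hQ
    (fun ε hε => hcmp.exists_isTouchingSupersolution (fun x => (hell.posDef x).posSemidef)
      hΨ.continuous hφ hΨφ hR ⟨y, by simp, hy⟩ hh0 hsup hε) x

end Rigidity

section LeftMonotonicity

variable {d : ℕ} {a : Euc d → Matrix (Fin d) (Fin d) ℝ} {b : Euc d → Euc d}
  {W U u s q φ h : Euc d → ℝ} {R₀ δ : ℝ} {x : Euc d}

lemma IsExteriorLyapunov.mono_potential (hφ : IsExteriorLyapunov a b W R₀ δ φ)
    (hU : ∀ x, U x ≤ W x) : IsExteriorLyapunov a b U R₀ δ φ :=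
  ⟨hφ.rate_pos, hφ.contDiff, hφ.pos,
    (hφ.isSupersolutionOn.mono_potential fun x _ => add_le_add_left (hU x) δ).le⟩

/-- The drift of Doob's `u`-transform: for a positive solution `u` of `𝓛u + Wu = 0`, the operator
`q ↦ u⁻¹ (𝓛(uq) + Wuq)` has the same second-order part as `𝓛`, this drift, and no potential. -/
def doobDrift (a : Euc d → Matrix (Fin d) (Fin d) ℝ) (b : Euc d → Euc d) (u : Euc d → ℝ)
    (x : Euc d) : Euc d :=
  b x + WithLp.toLp 2 fun i => (u x)⁻¹ * ∑ j, (a x i j + a x j i) * pd u j x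

lemma ContinuousElliptic.doobDrift_of_ne_zero (hell : ContinuousElliptic a b)
    (hu : ContDiff ℝ 2 u) (hu0 : ∀ x, u x ≠ 0) : ContinuousElliptic a (doobDrift a b u) :=
  ⟨hell.posDef, hell.continuous_coeff, hell.continuous_drift.add <|
    (PiLp.continuous_toLp 2 _).comp <| continuous_pi fun i => (hu.continuous.inv₀ hu0).mul <|
      continuous_finsetSum _ fun j _ => ((hell.continuous_coeff.matrix_elem i j).add
        (hell.continuous_coeff.matrix_elem j i)).mul (continuous_pd hu j)⟩

lemma mul_Lop_doobDrift (hu : ContDiffAt ℝ 2 u x) (hq : ContDiffAt ℝ 2 q x) (hu0 : u x ≠ 0) :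
    u x * Lop a (doobDrift a b u) q x = Lop a b (fun y => u y * q y) x - Lop a b u x * q x := by
  have hcross : u x * ∑ i, ((u x)⁻¹ * ∑ j, (a x i j + a x j i) * pd u j x) * pd q i x =
      carreDuChamp a u q x + carreDuChamp a q u x := by
    simp only [carreDuChamp, mul_assoc, Finset.mul_sum, Finset.sum_mul]
    rw [Finset.sum_comm (f := fun i j => a x i j * (pd u i x * pd q j x)),
      ← Finset.sum_add_distrib]
    refine Finset.sum_congr rfl fun i _ => ?_
    rw [← Finset.sum_add_distrib]
    refine Finset.sum_congr rfl fun j _ => ?_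
    field_simp
    ring
  have hdrift : Lop a (doobDrift a b u) q x = Lop a b q x +
      ∑ i, ((u x)⁻¹ * ∑ j, (a x i j + a x j i) * pd u j x) * pd q i x := by
    simp only [Lop, doobDrift, PiLp.add_apply, add_mul (b x _), Finset.sum_add_distrib, add_assoc]
  rw [Lop_mul hu hq, hdrift]
  linear_combination hcross

lemma Lop_sub_const_mul_mul_add (hu : ContDiffAt ℝ 2 u x) (hq : ContDiffAt ℝ 2 q x)
    (hu0 : u x ≠ 0) (hsol : Lop a b u x + W x * u x = 0) (ε : ℝ) :
    Lop a b (fun y => u y - ε * (u y * q y)) x + (W x - h x) * (u x - ε * (u x * q x)) =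
      -(u x * (ε * Lop a (doobDrift a b u) q x + h x * (1 - ε * q x))) := by
  rw [Lop_sub hu (contDiffAt_const.mul (hu.mul hq)), Lop_const_mul ε (hu.mul hq)]
  linear_combination (1 - ε * q x) * hsol + ε * mul_Lop_doobDrift (a := a) (b := b) hu hq hu0

lemma ContinuousElliptic.exists_perturbation (hell : ContinuousElliptic a b) (hh : Continuous h)
    (hh0 : ∀ x, 0 ≤ h x) (hne : ∃ x, h x ≠ 0) (R : ℝ) :
    ∃ (q : Euc d → ℝ) (ε : ℝ), ContDiff ℝ 2 q ∧ (∀ x, 0 ≤ ε * q x ∧ ε * q x < 1) ∧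
      (∀ x, 0 ≤ ε * Lop a b q x + h x * (1 - ε * q x)) ∧
      ∀ x ∈ closedBall 0 R, 0 < ε * Lop a b q x + h x * (1 - ε * q x) := by
  obtain ⟨x₀, hx₀⟩ := hne
  obtain ⟨r, hr, hhr⟩ := nhds_basis_closedBall.eventually_iff.mp
    (hh.continuousAt.eventually (lt_mem_nhds ((hh0 x₀).lt_of_ne' hx₀)))
  obtain ⟨ρ, hρ, hRρ⟩ := (isBounded_closedBall (x := (0 : Euc d)) (r := R)).subset_ball_lt 0 x₀
  obtain ⟨q, hq, hq01, hqpos, hLq⟩ := hell.exists_barrier x₀ hr hρ zero_le_one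
  obtain ⟨ε, hεh, hε, hε1⟩ := ((eventually_forall_mul_lt (isCompact_closedBall x₀ r)
    (g := fun x => h x * q x - Lop a b q x) hh.continuousOn
    ((hh.mul hq.continuous).sub (hell.continuous_Lop hq)).continuousOn
    fun x hx => hhr hx).and (Ioo_mem_nhdsGT one_pos)).exists
  have hεq (x : Euc d) : ε * q x < 1 :=
    (mul_le_of_le_one_right hε.le (hq01 x).2).trans_lt hε1
  have hnear (x : Euc d) (hx : dist x x₀ ≤ r) :
      0 < ε * Lop a b q x + h x * (1 - ε * q x) := by linarith [hεh x hx]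
  have hfar (x : Euc d) (hx : r ≤ dist x x₀) :
      ε * q x ≤ ε * Lop a b q x + h x * (1 - ε * q x) := by
    linarith [mul_le_mul_of_nonneg_left (hLq x hx) hε.le,
      mul_nonneg (hh0 x) (sub_pos.mpr (hεq x)).le]
  refine ⟨q, ε, hq, fun x => ⟨mul_nonneg hε.le (hq01 x).1, hεq x⟩, fun x => ?_, fun x hx => ?_⟩
  · rcases le_total (dist x x₀) r with hxr | hxr
    · exact (hnear x hxr).le
    · exact (mul_nonneg hε.le (hq01 x).1).trans (hfar x hxr)
  · rcases le_total (dist x x₀) r with hxr | hxr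
    · exact hnear x hxr
    · exact (mul_pos hε ((hqpos x).mpr (hRρ hx))).trans_le (hfar x hxr)

theorem ContinuousElliptic.exists_isSupersolutionOn_sub (hell : ContinuousElliptic a b)
    (hu : ContDiff ℝ 2 u) (hu0 : ∀ x, 0 < u x) (hsol : ∀ x, Lop a b u x + W x * u x = 0)
    (hh : Continuous h) (hh0 : ∀ x, 0 ≤ h x) (hne : ∃ x, h x ≠ 0) (R : ℝ) :
    ∃ s, IsSupersolutionOn a b (fun x => W x - h x) univ s ∧ (∀ x, s x ≤ u x) ∧
      ∀ x ∈ closedBall 0 R, Lop a b s x + (W x - h x) * s x < 0 := by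
  obtain ⟨q, ε, hq, hεq, hle, hlt⟩ :=
    (hell.doobDrift_of_ne_zero hu fun x => (hu0 x).ne').exists_perturbation hh hh0 hne R
  have hL (x : Euc d) := Lop_sub_const_mul_mul_add (h := h) hu.contDiffAt hq.contDiffAt
    (hu0 x).ne' (hsol x) ε
  refine ⟨fun x => u x - ε * (u x * q x),
    ⟨(hu.sub (contDiff_const.mul (hu.mul hq))).contDiffOn, fun x _ => ?_, fun x _ => ?_⟩,
    fun x => ?_, fun x hx => ?_⟩
  · linarith [mul_pos (hu0 x) (sub_pos.mpr (hεq x).2)]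
  · rw [hL, neg_nonpos]
    exact mul_nonneg (hu0 x).le (hle x)
  · linarith [mul_nonneg (hu0 x).le (hεq x).1]
  · rw [hL, neg_lt_zero]
    exact mul_pos (hu0 x) (hlt x hx)

theorem IsExteriorLyapunov.exists_isSupersolutionOn_add (hφ : IsExteriorLyapunov a b W R₀ δ φ)
    (hell : ContinuousElliptic a b) (hW : Continuous W) (hs : IsSupersolutionOn a b W univ s)
    (hsφ : ∀ x, s x ≤ φ x) (hlt : ∀ x ∈ closedBall 0 R₀, Lop a b s x + W x * s x < 0) :
    ∃ γ > 0, ∃ w, IsSupersolutionOn a b (fun x => W x + γ) univ w := by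
  have hLs : Continuous fun x => Lop a b s x + W x * s x :=
    (hell.continuous_Lop hs.contDiff).add (hW.mul hs.contDiff.continuous)
  have hLφ : Continuous fun x => Lop a b φ x + W x * φ x :=
    (hell.continuous_Lop hφ.contDiff).add (hW.mul hφ.contDiff.continuous)
  obtain ⟨ε, hεball, hε⟩ := ((eventually_forall_mul_lt (isCompact_closedBall 0 R₀)
    (f := fun x => -(Lop a b s x + W x * s x)) hLs.neg.continuousOn hLφ.continuousOn
    fun x hx => neg_pos.mpr (hlt x hx)).and self_mem_nhdsWithin).exists
  replace hε : 0 < ε := hε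
  have hδ := hφ.rate_pos
  obtain ⟨γ, hγball, hγ⟩ := ((eventually_forall_mul_lt (isCompact_closedBall 0 R₀)
    (f := fun x => -(Lop a b s x + W x * s x) - ε * (Lop a b φ x + W x * φ x))
    (g := fun x => s x + ε * φ x) (hLs.neg.sub (continuous_const.mul hLφ)).continuousOn
    (hs.contDiff.continuous.add (continuous_const.mul hφ.contDiff.continuous)).continuousOn
    fun x hx => sub_pos.mpr (hεball x hx)).and
    (Ioc_mem_nhdsGT (show 0 < ε * δ / (1 + ε) by positivity))).exists
  have hγδ := (le_div_iff₀ (by positivity)).mp hγ.2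
  have hεφ : ContDiff ℝ 2 fun x => ε * φ x := contDiff_const.mul hφ.contDiff
  refine ⟨γ, hγ.1, fun x => s x + ε * φ x, (hs.contDiff.add hεφ).contDiffOn,
    fun x hx => add_pos (hs.pos x hx) (mul_pos hε (hφ.pos x)), fun x hx => ?_⟩
  rw [Lop_add hs.contDiff.contDiffAt hεφ.contDiffAt, Lop_const_mul ε hφ.contDiff.contDiffAt]
  rcases le_or_gt ‖x‖ R₀ with hxR | hxR
  · linarith [hγball x (by simpa using hxR)]
  · have hγs := mul_le_mul_of_nonneg_left (hsφ x) hγ.1.le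
    have hγφ := mul_le_mul_of_nonneg_right hγδ (hφ.pos x).le
    linarith [hs.le x hx, mul_le_mul_of_nonneg_left (hφ.le x hxR) hε.le]

end LeftMonotonicity

section GroundState

variable {d : ℕ} {a : Euc d → Matrix (Fin d) (Fin d) ℝ} {b : Euc d → Euc d}
  {W Ψ φ v : Euc d → ℝ} {R₀ R δ : ℝ}

lemma HasMinimalGrowth.exists_isExteriorLyapunov_ge (hmin : HasMinimalGrowth a b W Ψ)
    (hΨ : Continuous Ψ) (hφ : IsExteriorLyapunov a b W R₀ δ φ) :
    ∃ φ', IsExteriorLyapunov a b W R₀ δ φ' ∧ ∀ x, Ψ x ≤ φ' x := by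
  obtain ⟨ε, hε, hle⟩ := hmin.exists_mul_le hΨ hφ.rate_pos hφ.isSupersolutionOn isClosed_univ
    hφ.contDiff.continuous.continuousOn fun x _ => hφ.pos x
  have hφ' := hφ.isSupersolutionOn.const_mul (isOpen_lt_norm R₀) (inv_pos.mpr hε)
  exact ⟨fun x => ε⁻¹ * φ x, ⟨hφ.rate_pos, contDiff_const.mul hφ.contDiff,
    fun x => mul_pos (inv_pos.mpr hε) (hφ.pos x), hφ'.le⟩,
    fun x => (le_inv_mul_iff₀ hε).mpr (hle x (mem_univ x))⟩

lemma ExteriorComparison.le_of_isSupersolutionOn (hcmp : ExteriorComparison a b W Ψ)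
    (ha : ∀ x, (a x).PosSemidef) (hφ : IsExteriorLyapunov a b W R₀ δ φ) (hΨφ : ∀ x, Ψ x ≤ φ x)
    {R₁ : ℝ} (hR₁ : R₀ ≤ R₁) (hR : R₁ < R) (hv : IsSupersolutionOn a b W {x | R₁ < ‖x‖} v)
    (hΨv : ∀ x, ‖x‖ = R → Ψ x ≤ v x) {x : Euc d} (hx : R ≤ ‖x‖) : Ψ x ≤ v x := by
  have hlim : Tendsto (fun κ => v x + κ * φ x) (nhdsWithin 0 (Ioi 0)) (nhds (v x + 0 * φ x)) :=
    (tendsto_const_nhds.add (tendsto_id.mul_const _)).mono_left nhdsWithin_le_nhds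
  rw [zero_mul, add_zero] at hlim
  refine ge_of_tendsto hlim ?_
  filter_upwards [Ioc_mem_nhdsGT one_pos] with κ hκ
  exact hcmp.le_add ha hR (hφ.isSupersolutionOn.mono_set (lt_norm_subset hR₁))
    (hv.mono_potential fun y _ => (sub_zero _).le) hκ.1.le hκ.2
    (by linarith [mul_pos hκ.1 hφ.rate_pos]) (fun y _ => hΨφ y) hΨv hx

theorem ExteriorComparison.isGroundState (hcmp : ExteriorComparison a b W Ψ)
    (ha : ∀ x, (a x).PosSemidef) (hφ : IsExteriorLyapunov a b W R₀ δ φ) (hΨφ : ∀ x, Ψ x ≤ φ x)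
    (hΨ : ContDiff ℝ 2 Ψ) (hΨ0 : ∀ x, 0 < Ψ x) (hsol : ∀ x, Lop a b Ψ x + W x * Ψ x = 0) :
    IsGroundState a b W Ψ univ := by
  refine ⟨fun x _ => hΨ0 x, hΨ.contDiffOn, fun x _ => hsol x, fun K hK _ v hv hv0 hvs => ?_⟩
  obtain ⟨R₁, hR₁, hKR⟩ := exists_radius_of_eventually_cocompact hK.compl_mem_cocompact R₀
  have hsuper : IsSupersolutionOn a b W {x | R₁ < ‖x‖} v :=
    IsSupersolutionOn.mono_set ⟨hv, hv0, hvs⟩ fun x hx => ⟨mem_univ x, hKR x hx⟩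
  have hS : sphere (0 : Euc d) (R₁ + 1) ⊆ {x | R₁ < ‖x‖} := fun x hx =>
    (lt_add_one R₁).trans_eq (mem_sphere_zero_iff_norm.mp hx).symm
  obtain ⟨κ, hle, hκ⟩ := ((eventually_forall_mul_lt (isCompact_sphere (0 : Euc d) (R₁ + 1))
    (hsuper.contDiffOn.continuousOn.mono hS) hΨ.continuous.continuousOn
    fun x hx => hsuper.pos x (hS hx)).and self_mem_nhdsWithin).exists
  replace hκ : 0 < κ := hκ
  refine ⟨K ∪ closedBall 0 (R₁ + 1), hK.union (isCompact_closedBall _ _), subset_union_left,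
    subset_univ _, κ, hκ, fun x hx => ?_⟩
  have hxR : R₁ + 1 ≤ ‖x‖ := le_of_not_ge fun h => hx.2 (Or.inr (by simpa using h))
  rw [← le_inv_mul_iff₀ hκ]
  exact hcmp.le_of_isSupersolutionOn ha hφ hΨφ hR₁.le (lt_add_one R₁)
    (hsuper.const_mul (isOpen_lt_norm R₁) (inv_pos.mpr hκ))
    (fun y hy => (le_inv_mul_iff₀ hκ).mpr (hle y (by simpa using hy)).le) hxR

end GroundState

section PrincipalEigenvalue

variable {d : ℕ} {a : Euc d → Matrix (Fin d) (Fin d) ℝ} {b : Euc d → Euc d}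
  {V V' W Ψ φ s h : Euc d → ℝ} {lam H R₀ δ : ℝ}

lemma mem_supersolutions_iff : lam ∈ supersolutions a b V univ ↔
    ∃ s, IsSupersolutionOn a b (fun x => V x - lam) univ s := by
  refine exists_congr fun s => ⟨fun ⟨hpos, hs, hle⟩ => ⟨hs, hpos, fun x hx => ?_⟩,
    fun hs => ⟨hs.pos, hs.contDiffOn, fun x hx => ?_⟩⟩
  · linarith [hle x hx]
  · linarith [hs.le x hx]

lemma exists_isSupersolutionOn_of_lamStar_lt (hne : (supersolutions a b V univ).Nonempty)
    (hlt : lamStar a b V univ < lam) : ∃ s, IsSupersolutionOn a b (fun x => V x - lam) univ s := by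
  obtain ⟨μ, hμ, hμlam⟩ := exists_lt_of_csInf_lt hne hlt
  obtain ⟨s, hs⟩ := mem_supersolutions_iff.mp hμ
  exact ⟨s, hs.mono_potential fun x _ => sub_le_sub_left hμlam.le _⟩

lemma add_mem_supersolutions (hlam : lam ∈ supersolutions a b V univ)
    (hV : ∀ x, V' x ≤ V x + H) : lam + H ∈ supersolutions a b V' univ := by
  obtain ⟨s, hs⟩ := mem_supersolutions_iff.mp hlam
  exact mem_supersolutions_iff.mpr ⟨s, hs.mono_potential fun x _ => by linarith [hV x]⟩

lemma C0plus.exists_abs_le (hh : C0plus h) : ∃ H, ∀ x, |h x| ≤ H :=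
  let f : ZeroAtInftyContinuousMap (Euc d) ℝ := ⟨⟨h, hh.1⟩, hh.2.2.2⟩
  ⟨‖f.toBCF‖, f.toBCF.norm_coe_le_norm⟩

lemma C0plus_inv_one_add_norm : C0plus fun x : Euc d => (1 + ‖x‖)⁻¹ :=
  ⟨(continuous_const.add continuous_norm).inv₀ fun x =>
      ne_of_gt (add_pos_of_pos_of_nonneg one_pos (norm_nonneg x)),
    fun x => by positivity, ⟨0, by simp⟩,
    (tendsto_atTop_add_const_left _ _
      (tendsto_norm_cocompact_atTop (E := Euc d))).inv_tendsto_atTop⟩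

namespace lamStarFinite

lemma of_abs_sub_le (hfin : lamStarFinite a b V univ) (hV : ∀ x, |V' x - V x| ≤ H) :
    lamStarFinite a b V' univ := by
  obtain ⟨⟨l, hl⟩, m, hm⟩ := hfin
  refine ⟨⟨l + H, add_mem_supersolutions hl fun x => ?_⟩, m - H, fun μ hμ => ?_⟩
  · linarith [(abs_le.mp (hV x)).2]
  · exact sub_le_iff_le_add.mpr
      (hm (add_mem_supersolutions hμ fun x => by linarith [(abs_le.mp (hV x)).1]))

lemma add_C0plus (hfin : lamStarFinite a b V univ) (hh : C0plus h) :
    lamStarFinite a b (fun x => V x + h x) univ := by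
  obtain ⟨H, hH⟩ := hh.exists_abs_le
  exact hfin.of_abs_sub_le fun x => by simpa using hH x

lemma sub_C0plus (hfin : lamStarFinite a b V univ) (hh : C0plus h) :
    lamStarFinite a b (fun x => V x - h x) univ := by
  obtain ⟨H, hH⟩ := hh.exists_abs_le
  exact hfin.of_abs_sub_le fun x => by simpa using hH x

end lamStarFinite

lemma IsSupersolutionOn.exists_isExteriorLyapunov {a₁ : Euc d → Matrix (Fin d) (Fin d) ℝ}
    {b₁ : Euc d → Euc d} {W₁ : Euc d → ℝ} (hs : IsSupersolutionOn a₁ b₁ W₁ univ s)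
    (hcoef : ∀ᶠ x in cocompact (Euc d), a₁ x = a x ∧ b₁ x = b x) {c : ℝ} (hc : 0 < c)
    (hW : Tendsto (fun x => W₁ x - W x) (cocompact (Euc d)) (nhds c)) :
    ∃ R₀ δ, IsExteriorLyapunov a b W R₀ δ s := by
  obtain ⟨R₀, -, hR₀⟩ := exists_radius_of_eventually_cocompact
    (hcoef.and (hW.eventually (lt_mem_nhds (half_lt_self hc)))) 0
  refine ⟨R₀, c / 2, half_pos hc, hs.contDiff, fun x => hs.pos x (mem_univ x), ?_⟩
  exact (((hs.mono_set (subset_univ {x | R₀ < ‖x‖})).congr_coeff fun x hx =>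
    (hR₀ x hx).1).mono_potential fun x hx => by linarith [(hR₀ x hx).2]).le

lemma exists_isExteriorLyapunov_of_lamStar_sub_lt {a₁ : Euc d → Matrix (Fin d) (Fin d) ℝ}
    {b₁ : Euc d → Euc d} {V₁ : Euc d → ℝ} (hfin : lamStarFinite a₁ b₁ V₁ univ)
    (hh : C0plus h) (hlt : lamStar a₁ b₁ (fun x => V₁ x - h x) univ < lam)
    (hcoef : ∀ᶠ x in cocompact (Euc d), a₁ x = a x ∧ b₁ x = b x)
    (hV : Tendsto (fun x => V₁ x - V x) (cocompact (Euc d)) (nhds 0)) :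
    ∃ φ R₀ δ, IsExteriorLyapunov a b (fun x => V x - lam) R₀ δ φ := by
  obtain ⟨μ, hμ, hμlam⟩ := exists_between hlt
  obtain ⟨φ, hφ⟩ := exists_isSupersolutionOn_of_lamStar_lt (hfin.sub_C0plus hh).1 hμ
  refine ⟨φ, hφ.exists_isExteriorLyapunov hcoef (sub_pos.mpr hμlam) ?_⟩
  convert (hV.sub hh.2.2.2).add_const (lam - μ) using 2 <;> ring

theorem ExteriorComparison.pos_and_Lop_add_mul_eq_zero (hcmp : ExteriorComparison a b W Ψ)
    (hell : ContinuousElliptic a b) (hW : Continuous W) (hΨ : ContDiff ℝ 2 Ψ)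
    (hpos : ∃ x, 0 < Ψ x) (hφ : IsExteriorLyapunov a b W R₀ δ φ) (hΨφ : ∀ x, Ψ x ≤ φ x)
    (hsup : ∀ η > 0, ∃ w, IsSupersolutionOn a b (fun x => W x - η) univ w)
    (hsub : ∀ x, 0 ≤ Lop a b Ψ x + W x * Ψ x) (x : Euc d) :
    0 < Ψ x ∧ Lop a b Ψ x + W x * Ψ x = 0 := by
  have hrigid (y : Euc d) : 0 ≤ Ψ y ∧ Lop a b Ψ y + W y * Ψ y = 0 := by
    simpa using hcmp.nonneg_and_Lop_add_mul_eq_zero hell hW hΨ hpos hφ hΨφ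
      (continuous_const (y := 0)) (fun _ => le_rfl) (by simpa using hsup) (by simpa using hsub) y
  obtain ⟨y, hy⟩ := hpos
  exact ⟨hell.pos_of_nonneg hW hΨ (fun y => (hrigid y).1) (fun y => (hrigid y).2.le)
    ⟨y, hy.ne'⟩ x, (hrigid x).2⟩

theorem ExteriorComparison.lt_lamStar_add
    (hcmp : ExteriorComparison a b (fun x => V x - lam) Ψ) (hell : ContinuousElliptic a b)
    (hV : Continuous V) (hΨ : ContDiff ℝ 2 Ψ) (hΨ0 : ∀ x, 0 < Ψ x)
    (hsol : ∀ x, Lop a b Ψ x + (V x - lam) * Ψ x = 0)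
    (hφ : IsExteriorLyapunov a b (fun x => V x - lam) R₀ δ φ) (hΨφ : ∀ x, Ψ x ≤ φ x)
    (hh : Continuous h) (hh0 : ∀ x, 0 ≤ h x) (hne : ∃ x, h x ≠ 0)
    (hfin : (supersolutions a b (fun x => V x + h x) univ).Nonempty) :
    lam < lamStar a b (fun x => V x + h x) univ := by
  by_contra! hle
  obtain ⟨x, hx⟩ := hne
  have hsup (η : ℝ) (hη : 0 < η) :
      ∃ w, IsSupersolutionOn a b (fun x => V x - lam + h x - η) univ w := by
    obtain ⟨w, hw⟩ := exists_isSupersolutionOn_of_lamStar_lt hfin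
      (hle.trans_lt (lt_add_of_pos_right lam hη))
    exact ⟨w, hw.mono_potential fun y _ => by linarith⟩
  have hzero := (hcmp.nonneg_and_Lop_add_mul_eq_zero hell (hV.sub continuous_const) hΨ
    ⟨x, hΨ0 x⟩ hφ hΨφ hh hh0 hsup (fun y => by
      linarith [hsol y, mul_nonneg (hh0 y) (hΨ0 y).le]) x).2
  exact (mul_pos ((hh0 x).lt_of_ne' hx) (hΨ0 x)).ne' (by linarith [hsol x])

theorem ExteriorComparison.le_lamStar
    (hcmp : ExteriorComparison a b (fun x => V x - lam) Ψ) (hell : ContinuousElliptic a b)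
    (hV : Continuous V) (hΨ : ContDiff ℝ 2 Ψ) (hΨ0 : ∀ x, 0 < Ψ x)
    (hsol : ∀ x, Lop a b Ψ x + (V x - lam) * Ψ x = 0)
    (hφ : IsExteriorLyapunov a b (fun x => V x - lam) R₀ δ φ) (hΨφ : ∀ x, Ψ x ≤ φ x)
    (hfin : lamStarFinite a b V univ) : lam ≤ lamStar a b V univ := by
  refine le_csInf hfin.1 fun μ hμ => le_of_forall_pos_le_add fun η hη => ?_
  have hmem := add_mem_supersolutions (V' := fun x => V x + η) hμ fun x => le_rfl
  exact (hcmp.lt_lamStar_add hell hV hΨ hΨ0 hsol hφ hΨφ continuous_const (fun _ => hη.le)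
    ⟨0, hη.ne'⟩ ⟨_, hmem⟩).le.trans
      (csInf_le (hfin.of_abs_sub_le (H := |η|) fun x => by simp).2 hmem)

theorem IsExteriorLyapunov.lamStar_sub_lt (hell : ContinuousElliptic a b) (hV : Continuous V)
    (hΨ : ContDiff ℝ 2 Ψ) (hΨ0 : ∀ x, 0 < Ψ x)
    (hsol : ∀ x, Lop a b Ψ x + (V x - lam) * Ψ x = 0)
    (hφ : IsExteriorLyapunov a b (fun x => V x - lam) R₀ δ φ) (hΨφ : ∀ x, Ψ x ≤ φ x)
    (hh : Continuous h) (hh0 : ∀ x, 0 ≤ h x) (hne : ∃ x, h x ≠ 0)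
    (hfin : BddBelow (supersolutions a b (fun x => V x - h x) univ)) :
    lamStar a b (fun x => V x - h x) univ < lam := by
  obtain ⟨s, hs, hsΨ, hlt⟩ := hell.exists_isSupersolutionOn_sub hΨ hΨ0 hsol hh hh0 hne R₀
  have hφh := hφ.mono_potential (U := fun x => V x - lam - h x) fun x => sub_le_self _ (hh0 x)
  obtain ⟨γ, hγ, w, hw⟩ := hφh.exists_isSupersolutionOn_add hell
    ((hV.sub continuous_const).sub hh) hs (fun x => (hsΨ x).trans (hΨφ x)) hlt
  have hmem : lam - γ ∈ supersolutions a b (fun x => V x - h x) univ :=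
    mem_supersolutions_iff.mpr ⟨w, hw.mono_potential fun x _ => by linarith⟩
  exact (csInf_le hfin hmem).trans_lt (sub_lt_self lam hγ)

end PrincipalEigenvalue

theorem statement4_general {d : ℕ} {a₁ a₂ : Euc d → Matrix (Fin d) (Fin d) ℝ}
    {b₁ b₂ : Euc d → Euc d} {V₁ V₂ Ψ₁ Ψ : Euc d → ℝ}
    (hell : ContinuousElliptic a₂ b₂) (hV₂ : Continuous V₂)
    (hfin₁ : lamStarFinite a₁ b₁ V₁ univ) (hfin₂ : lamStarFinite a₂ b₂ V₂ univ)
    (hcoef : ∀ᶠ x in cocompact (Euc d), a₁ x = a₂ x ∧ b₁ x = b₂ x)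
    (hVdiff : Tendsto (fun x => V₁ x - V₂ x) (cocompact (Euc d)) (nhds 0))
    (hleft : ∃ h, C0plus h ∧
      lamStar a₁ b₁ (fun x => V₁ x - h x) univ < lamStar a₁ b₁ V₁ univ)
    (hgs₁ : IsGroundState a₁ b₁ (fun x => V₁ x - lamStar a₁ b₁ V₁ univ) Ψ₁ univ)
    (hlam : lamStar a₂ b₂ V₂ univ ≤ lamStar a₁ b₁ V₁ univ)
    (hΨ : ContDiff ℝ 2 Ψ) (hpos : ∃ x, 0 < Ψ x)
    (hsub : ∀ x, lamStar a₁ b₁ V₁ univ * Ψ x ≤ Lop a₂ b₂ Ψ x + V₂ x * Ψ x)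
    {C : ℝ} (hC : 0 < C) (hbound : ∀ x, Ψ x ≤ C * Ψ₁ x) :
    StrictMonoAt a₂ b₂ V₂ ∧ lamStar a₁ b₁ V₁ univ = lamStar a₂ b₂ V₂ univ ∧
      IsGroundState a₂ b₂ (fun x => V₂ x - lamStar a₂ b₂ V₂ univ) Ψ univ := by
  set lam := lamStar a₁ b₁ V₁ univ
  have ha (x : Euc d) := (hell.posDef x).posSemidef
  have hsub' (x : Euc d) : 0 ≤ Lop a₂ b₂ Ψ x + (V₂ x - lam) * Ψ x := by linarith [hsub x]
  have hmin : HasMinimalGrowth a₂ b₂ (fun x => V₂ x - lam) Ψ :=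
    hgs₁.hasMinimalGrowth hcoef (by simpa using hVdiff) hC hbound
  have hcmp := hmin.exteriorComparison ha hΨ hsub'
  obtain ⟨h₁, hh₁, hlt⟩ := hleft
  obtain ⟨φ₀, R₀, δ, hφ₀⟩ :=
    exists_isExteriorLyapunov_of_lamStar_sub_lt hfin₁ hh₁ hlt hcoef hVdiff
  obtain ⟨φ, hφ, hΨφ⟩ := hmin.exists_isExteriorLyapunov_ge hΨ.continuous hφ₀
  have hsup (η : ℝ) (hη : 0 < η) :
      ∃ w, IsSupersolutionOn a₂ b₂ (fun x => V₂ x - lam - η) univ w := by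
    simpa only [sub_sub] using exists_isSupersolutionOn_of_lamStar_lt hfin₂.1
      (hlam.trans_lt (lt_add_of_pos_right lam hη))
  have hsolution := hcmp.pos_and_Lop_add_mul_eq_zero hell (hV₂.sub continuous_const) hΨ hpos hφ
    hΨφ hsup hsub'
  have hΨ0 (x : Euc d) := (hsolution x).1
  have hsol (x : Euc d) := (hsolution x).2
  have heq : lam = lamStar a₂ b₂ V₂ univ :=
    (hcmp.le_lamStar hell hV₂ hΨ hΨ0 hsol hφ hΨφ hfin₂).antisymm hlam
  rw [StrictMonoAt, ← heq]
  exact ⟨fun h hh => ⟨hφ.lamStar_sub_lt hell hV₂ hΨ hΨ0 hsol hΨφ hh.1 hh.2.1 hh.2.2.1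
      (hfin₂.sub_C0plus hh).2,
    hcmp.lt_lamStar_add hell hV₂ hΨ hΨ0 hsol hφ hΨφ hh.1 hh.2.1 hh.2.2.1 (hfin₂.add_C0plus hh).1⟩,
    rfl, hcmp.isGroundState ha hφ hΨφ hΨ hΨ0 hsol⟩

/-- Theorem 2.4: transfer of strict monotonicity of the principal eigenvalue under
small perturbations. -/
theorem statement4 {d : ℕ} (hd : 1 ≤ d)
    (a₁ a₂ : Euc d → Matrix (Fin d) (Fin d) ℝ) (b₁ b₂ : Euc d → Euc d) (V₁ V₂ : Euc d → ℝ)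
    (hstand₁ : StandingH a₁ b₁) (hstand₂ : StandingH a₂ b₂)
    (hV₁reg : LocallyHolder V₁) (hV₂reg : LocallyHolder V₂)
    (hV₁bdd : ∃ m, ∀ x, m ≤ V₁ x) (hV₂bdd : ∃ m, ∀ x, m ≤ V₂ x)
    (hfin₁ : lamStarFinite a₁ b₁ V₁ Set.univ) (hfin₂ : lamStarFinite a₂ b₂ V₂ Set.univ)
    (hpert : ∃ K : Set (Euc d), IsCompact K ∧ ∀ x ∉ K, a₁ x = a₂ x ∧ b₁ x = b₂ x)
    (hVdiff : Tendsto (fun x => V₁ x - V₂ x) (cocompact (Euc d)) (nhds 0))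
    (hmono₁ : StrictMonoAt a₁ b₁ V₁)
    (Ψ₁ : Euc d → ℝ)
    (hgs₁ : IsGroundState a₁ b₁ (fun x => V₁ x - lamStar a₁ b₁ V₁ Set.univ) Ψ₁ Set.univ)
    (hlam : lamStar a₂ b₂ V₂ Set.univ ≤ lamStar a₁ b₁ V₁ Set.univ)
    (Ψ : Euc d → ℝ) (hΨC2 : ContDiff ℝ 2 Ψ) (hΨplus : ∃ x, 0 < Ψ x)
    (hsub : ∀ x, lamStar a₁ b₁ V₁ Set.univ * Ψ x ≤ Lop a₂ b₂ Ψ x + V₂ x * Ψ x)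
    (C : ℝ) (hC : 0 < C) (hbound : ∀ x, max (Ψ x) 0 ≤ C * Ψ₁ x) :
    StrictMonoAt a₂ b₂ V₂ ∧
    lamStar a₁ b₁ V₁ Set.univ = lamStar a₂ b₂ V₂ Set.univ ∧
    ∃ (u : Euc d → ℝ) (κ : ℝ), 0 < κ ∧
      IsGroundState a₂ b₂ (fun x => V₂ x - lamStar a₂ b₂ V₂ Set.univ) u Set.univ ∧
      ∀ x, Ψ x = κ * u x := by
  have ⟨hmono₂, heq, hgs⟩ := statement4_general hstand₂.continuousElliptic hV₂reg.continuous hfin₁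
    hfin₂ (hpert.elim fun _ hK => mem_of_superset hK.1.compl_mem_cocompact hK.2) hVdiff
    ⟨_, C0plus_inv_one_add_norm, (hmono₁ _ C0plus_inv_one_add_norm).1⟩ hgs₁ hlam hΨC2 hΨplus hsub
    hC fun x => (le_max_left _ _).trans (hbound x)
  exact ⟨hmono₂, heq, Ψ, 1, one_pos, hgs, fun x => (one_mul _).symm⟩
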